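/- Let w ≥ 3 be an integer. (a) If w is even then V_{w,3} = S_{w,3}; in particular every multiple zeta value ζ(a,b,c) with a+b+c = w, c ≥ 2, is a ℚ-linear combination of monomials of weight < w, monomials of depth ≤ 2, and products of two monomials of positive weight with total weight ≤ w and total depth ≤ 3. (b) If w is odd and w ≥ 5 then dim_ℚ (V_{w,3}/S_{w,3}) ≤ ⌊((w−3)²−1)/48⌋. -/

import Mathlib

/-- The multiple zeta value `ζ(n_1,…,n_p) = Σ_{0<k_1<⋯<k_p} 1/(k_1^{n_1}⋯k_p^{n_p})`. -/
noncomputable def mzv (p : ℕ) (n : Fin p → ℕ) : ℝ :=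
  ∑' k : {k : Fin p → ℕ // StrictMono k ∧ ∀ i, 0 < k i},
    ∏ i, (((k.1 i : ℝ)) ^ (n i))⁻¹

/-- An index (composition) `(n_1,…,n_{p+1})` for a multiple zeta value. -/
abbrev MZIndex : Type := (p : ℕ) × (Fin (p + 1) → ℕ)

/-- Admissibility: all `n_i ≥ 1` and the last entry is `≥ 2`. -/
def MZIndex.Admissible (z : MZIndex) : Prop :=
  (∀ i, 1 ≤ z.2 i) ∧ 2 ≤ z.2 (Fin.last z.1)

/-- The weight `n_1 + ⋯ + n_{p+1}` of an index. -/
def MZIndex.weight (z : MZIndex) : ℕ := ∑ i, z.2 i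

/-- The depth `p + 1` of an index. -/
def MZIndex.depth (z : MZIndex) : ℕ := z.1 + 1

/-- `x` is a monomial of weight `w'` and depth `m'`: `x = π^{2a}·ζ(s⁽¹⁾)⋯ζ(s⁽ᵏ⁾)` with
admissible indices `s⁽ⁱ⁾`, `w' = 2a + Σ weights`, `m' = Σ depths`. -/
def IsMonomial (x : ℝ) (w' m' : ℕ) : Prop :=
  ∃ (a : ℕ) (zs : List MZIndex), (∀ z ∈ zs, z.Admissible) ∧
    x = Real.pi ^ (2 * a) * (zs.map fun z => mzv (z.1 + 1) z.2).prod ∧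
    w' = 2 * a + (zs.map MZIndex.weight).sum ∧
    m' = (zs.map MZIndex.depth).sum

/-- `V_{w,m}`: the ℚ-span of all monomials of weight `≤ w` and depth `≤ m`. -/
noncomputable def Vspan (w m : ℕ) : Submodule ℚ ℝ :=
  Submodule.span ℚ {x | ∃ w' m', w' ≤ w ∧ m' ≤ m ∧ IsMonomial x w' m'}

/-- `S_{w,m} = V_{w−1,m} + V_{w,m−1} + Σ V_{w₁,m₁}·V_{w₂,m₂}` (sum over `w₁,w₂ ≥ 1`,
`w₁+w₂ ≤ w`, `m₁+m₂ ≤ m`). -/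
noncomputable def Sspan (w m : ℕ) : Submodule ℚ ℝ :=
  Vspan (w - 1) m ⊔ Vspan w (m - 1) ⊔
    ⨆ (w₁ : ℕ) (w₂ : ℕ) (m₁ : ℕ) (m₂ : ℕ) (_ : 1 ≤ w₁) (_ : 1 ≤ w₂)
      (_ : w₁ + w₂ ≤ w) (_ : m₁ + m₂ ≤ m),
      Submodule.span ℚ {x | ∃ y ∈ Vspan w₁ m₁, ∃ z ∈ Vspan w₂ m₂, x = y * z}

/-- `f` vanishes on the shuffles of a letter with a word of length two. -/
def IsShuffleZero (f : ℚ → ℚ → ℚ → ℚ) : Prop :=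
  ∀ x y z, f x y z + f y x z + f y z x = 0

/-- The change of variables under which the shuffle product of multiple zeta values becomes the
shuffle of variables. -/
def sharp (f : ℚ → ℚ → ℚ → ℚ) (x y z : ℚ) : ℚ := f x (x + y) (x + y + z)

theorem IsShuffleZero.reverse {f : ℚ → ℚ → ℚ → ℚ} (h : IsShuffleZero f) (x y z : ℚ) :
    f z y x = f x y z := by
  linarith [h x y z, h z y x]

section DoubleShuffle

variable {f : ℚ → ℚ → ℚ → ℚ}

/-- If the failure of the shuffle relations for `sharp f` does not depend on the last variable,
then the stuffle relations force it to vanish. -/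
theorem isShuffleZero_sharp_of_const (hS : IsShuffleZero f) (r : ℚ → ℚ → ℚ)
    (hr : ∀ x y z, sharp f x y z + sharp f y x z + sharp f y z x = r x y) :
    IsShuffleZero (sharp f) := by
  have h0 : r 0 0 = 0 := by
    have h1 := hr 0 0 0
    have h2 := hS 0 0 0
    simp only [sharp, add_zero] at h1
    linarith
  have hsymm : ∀ x y, r x y = r 0 x + r 0 y - r x 0 := fun x y => by
    linarith [hr x y 0, hr x 0 y, hr y x 0, hr y 0 x, hr 0 x y, hr 0 y x]
  have hzero : ∀ x, r 0 x = 2 * r x 0 := fun x => by linarith [hsymm x 0]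
  have hxx : ∀ x, f 0 x x = 2 * r x 0 := fun x => by
    have h1 := hr 0 x 0
    have h2 := hS x x x
    simp only [sharp, add_zero, zero_add] at h1
    linarith [hzero x]
  have h00 : ∀ x, f 0 0 x = -r x 0 := fun x => by
    have h1 := hr 0 0 x
    simp only [sharp, add_zero, zero_add] at h1
    linarith [hxx x]
  have h0x0 : ∀ x, f 0 x 0 = 2 * r x 0 := fun x => by
    linarith [hS 0 0 x, h00 x]
  have hrel : ∀ x, 3 * r x 0 + 2 * r (-x) 0 = 0 := fun x => by
    have h1 := hr x 0 (-x)
    simp only [sharp, add_zero, zero_add, add_neg_cancel, neg_add_cancel] at h1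
    linarith [hS.reverse 0 x x, hxx x, h0x0 x, h0x0 (-x)]
  have hα : ∀ x, r x 0 = 0 := fun x => by
    have h1 := hrel x
    have h2 := hrel (-x)
    rw [neg_neg] at h2
    linarith
  intro x y z
  rw [hr, hsymm, hzero, hzero, hα, hα]
  norm_num

/-- Solutions of the linearized double shuffle equations in depth three are even. -/
theorem even_of_doubleShuffle (hS : IsShuffleZero f) (hT : IsShuffleZero (sharp f)) (x y z : ℚ) :
    f (-x) (-y) (-z) = f x y z := by
  have e0 := hS (-x + y) (-x) (-x + z)
  have e1 := hT (y - z) (-x) z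
  have e2 := hT (-x) (y - z) z
  have e3 := hS (y - z) (-x + y) y
  have e4 := hS (-x + y) (y - z) y
  have e5 := hT (-x + y) (-y) z
  have e6 := hS (-y) (-x) (-x + z)
  have e7 := hS (-x + z) (-x) (-y)
  have e8 := hS (-y) (-x + z) (-y + z)
  have e9 := hS (-x + z) (-y) (-y + z)
  have e10 := hS (-x + z) (-x) (-x + y)
  have e11 := hS (-x) (-x + z) (-x + y)
  have e12 := hS (-z) (-x) (-y)
  have e13 := hT (-z) (-x + z) (x - y)
  have e14 := hT (-y) (-x + z) (y - z)
  have e15 := hT (-x + z) (-y) (y - z)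
  have e16 := hS (-y) (-x) (-z)
  have e17 := hS (-x) (-y) (-z)
  have e18 := hT (-x + y) x (-z)
  have e19 := hT z (y - z) (x - y)
  have e20 := hS x z y
  have e21 := hS z x y
  have e22 := hS x (y - z) y
  have e23 := hS (y - z) x y
  have e24 := hS x (y - z) (x - z)
  have e25 := hS (y - z) x (x - z)
  simp only [sharp] at e1 e2 e5 e13 e14 e15 e18 e19
  ring_nf at e0 e1 e2 e3 e4 e5 e6 e7 e8 e9 e10 e11 e12 e13 e14 e15 e16 e17 e18 e19 e20 e21 e22 e23 e24 e25 ⊢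
  linarith

/-- The generating function `f` in coordinates in which the symmetric group on the four points
`0, x, y, z`, together with `-1`, acts by signed permutations. -/
def octa (f : ℚ → ℚ → ℚ → ℚ) (a b c : ℚ) : ℚ := f (b + c) (a + b) (a + c)

theorem octa_swap (hS : IsShuffleZero f) (a b c : ℚ) : octa f b a c = octa f a b c := by
  rw [octa, octa, hS.reverse, add_comm a b]

theorem octa_neg_left (hS : IsShuffleZero f) (hT : IsShuffleZero (sharp f)) (a b c : ℚ) :
    octa f (-a) b c = octa f a b c := by
  have h := hT.reverse (c - a) (b - c) (a + c)
  have h' := hS.reverse (b + c) (b - a) (c - a)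
  have h'' := hS.reverse (b + c) (a + b) (a + c)
  simp only [sharp, octa] at h ⊢
  ring_nf at h h' h'' ⊢
  linarith

theorem octa_neg_right (hS : IsShuffleZero f) (hT : IsShuffleZero (sharp f)) (a b c : ℚ) :
    octa f a b (-c) = octa f a b c := by
  have h := even_of_doubleShuffle hS hT (b + c) (a + b) (a + c)
  rw [← octa_neg_left hS hT, ← octa_swap hS, ← octa_neg_left hS hT, ← octa_swap hS]
  simp only [octa]
  convert h using 2 <;> ring

theorem octa_cyclic_sum (hS : IsShuffleZero f) (a b c : ℚ) :
    octa f a b c + octa f b c a + octa f c a b = 0 := by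
  have h := hS (b + c) (a + b) (a + c)
  have h' := hS.reverse (c + a) (b + c) (b + a)
  simp only [octa]
  ring_nf at h h' ⊢
  linarith

theorem octa_rotated_cyclic_sum (hT : IsShuffleZero (sharp f)) (a b c : ℚ) :
    octa f (a + b) (b - a) c + octa f (b + c) (c - b) a + octa f (c + a) (a - c) b = 0 := by
  have h := hT (b - a + c) (a + b - c) (a - b + c)
  have h' := hT.reverse (c - b + a) (b + c - a) (b - c + a)
  simp only [octa, sharp] at h h' ⊢
  ring_nf at h h' ⊢
  linarith

end DoubleShuffle

section PolynomialFunctions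

open MvPolynomial

/-- The exponents of the monomials of degree `d` in three variables. -/
def triples (d : ℕ) : Finset (ℕ × ℕ × ℕ) :=
  (Finset.range (d + 1) ×ˢ Finset.range (d + 1) ×ˢ Finset.range (d + 1)).filter
    fun m => m.1 + m.2.1 + m.2.2 = d

theorem mem_triples {d : ℕ} {m : ℕ × ℕ × ℕ} : m ∈ triples d ↔ m.1 + m.2.1 + m.2.2 = d := by
  simp only [triples, Finset.mem_filter, Finset.mem_product, Finset.mem_range]
  omega

theorem sum_triples_eq {A : Type*} [AddCommMonoid A] (d : ℕ) (F : ℕ → ℕ → ℕ → A) :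
    ∑ m ∈ triples d, F m.1 m.2.1 m.2.2 =
      ∑ p ∈ Finset.HasAntidiagonal.antidiagonal d, ∑ q ∈ Finset.HasAntidiagonal.antidiagonal p.1, F q.1 q.2 p.2 := by
  rw [Finset.sum_sigma']
  refine Finset.sum_bij' (fun m _ => ⟨(m.1 + m.2.1, m.2.2), (m.1, m.2.1)⟩)
    (fun s _ => (s.2.1, s.2.2, s.1.2)) ?_ ?_ ?_ ?_ ?_
  · intro m hm
    simpa using mem_triples.1 hm
  · intro s hs
    simp only [Finset.mem_sigma, Finset.HasAntidiagonal.mem_antidiagonal] at hs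
    rw [mem_triples]
    simp only
    omega
  · intro m hm
    rfl
  · rintro ⟨⟨n, k⟩, i, j⟩ hs
    simp only [Finset.mem_sigma, Finset.HasAntidiagonal.mem_antidiagonal] at hs
    obtain ⟨-, rfl⟩ := hs
    rfl
  · intro m hm
    rfl

/-- The monomial function `x ^ i * y ^ j * z ^ k`. -/
def monoFun (m : ℕ × ℕ × ℕ) (x y z : ℚ) : ℚ := x ^ m.1 * y ^ m.2.1 * z ^ m.2.2

/-- The exponent vector attached to a triple. -/
noncomputable def expo (m : ℕ × ℕ × ℕ) : Fin 3 →₀ ℕ :=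
  Finsupp.equivFunOnFinite.symm ![m.1, m.2.1, m.2.2]

theorem expo_injective : Function.Injective expo := by
  intro m n h
  have h' := congrArg (fun g : Fin 3 →₀ ℕ => (g : Fin 3 → ℕ)) h
  simp only [expo, Finsupp.coe_equivFunOnFinite_symm] at h'
  have h0 := congrFun h' 0
  have h1 := congrFun h' 1
  have h2 := congrFun h' 2
  simp at h0 h1 h2
  ext <;> assumption

/-- Evaluation of a polynomial in three variables as a function of three rational numbers. -/
noncomputable def evalFun : MvPolynomial (Fin 3) ℚ →ₗ[ℚ] (ℚ → ℚ → ℚ → ℚ) where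
  toFun p x y z := eval ![x, y, z] p
  map_add' p q := by
    ext x y z
    simp
  map_smul' c p := by
    ext x y z
    simp [smul_eval]

theorem evalFun_monomial (m : ℕ × ℕ × ℕ) (c : ℚ) :
    evalFun (monomial (expo m) c) = c • monoFun m := by
  ext x y z
  simp [evalFun, eval_monomial, expo, monoFun, Finsupp.prod_fintype, Fin.prod_univ_three]

theorem eq_expo (n : Fin 3 →₀ ℕ) : n = expo (n 0, n 1, n 2) := by
  ext i
  fin_cases i <;> simp [expo]

theorem degree_expo (m : ℕ × ℕ × ℕ) : (expo m).degree = m.1 + m.2.1 + m.2.2 := by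
  simp [Finsupp.degree_eq_sum, Fin.sum_univ_three, expo]

/-- The homogeneous polynomial functions of degree `d` in three variables. -/
noncomputable def homFun (d : ℕ) : Submodule ℚ (ℚ → ℚ → ℚ → ℚ) :=
  (homogeneousSubmodule (Fin 3) ℚ d).map evalFun

theorem monoFun_mem_homFun {d : ℕ} {m : ℕ × ℕ × ℕ} (hm : m ∈ triples d) :
    monoFun m ∈ homFun d := by
  refine ⟨monomial (expo m) 1, isHomogeneous_monomial _ ?_, ?_⟩
  · rw [degree_expo, mem_triples.1 hm]
  · rw [evalFun_monomial, one_smul]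

theorem homFun_le_span (d : ℕ) :
    homFun d ≤ Submodule.span ℚ (monoFun '' triples d) := by
  rintro _ ⟨p, hp, rfl⟩
  rw [p.as_sum, map_sum]
  refine Submodule.sum_mem _ fun n hn => ?_
  rw [eq_expo n, evalFun_monomial]
  refine Submodule.smul_mem _ _ (Submodule.subset_span ⟨_, ?_, rfl⟩)
  have h := hp (mem_support_iff.1 hn)
  have hdeg : n.degree = d := by rw [Finsupp.degree_eq_weight_one]; exact h
  rw [eq_expo n, degree_expo] at hdeg
  exact mem_triples.2 hdeg

/-- The polynomial function with coefficients `c`. -/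
def polyFun (d : ℕ) (c : ℕ × ℕ × ℕ → ℚ) : ℚ → ℚ → ℚ → ℚ := ∑ m ∈ triples d, c m • monoFun m

theorem polyFun_apply (d : ℕ) (c : ℕ × ℕ × ℕ → ℚ) (x y z : ℚ) :
    polyFun d c x y z = ∑ m ∈ triples d, c m * (x ^ m.1 * y ^ m.2.1 * z ^ m.2.2) := by
  simp [polyFun, monoFun, Finset.sum_apply]

theorem polyFun_mem_homFun (d : ℕ) (c : ℕ × ℕ × ℕ → ℚ) : polyFun d c ∈ homFun d :=
  Submodule.sum_mem _ fun _ hm => Submodule.smul_mem _ _ (monoFun_mem_homFun hm)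

/-- A polynomial function vanishing on the positive octant has vanishing coefficients. -/
theorem coeff_eq_zero_of_pos {d : ℕ} {c : ℕ × ℕ × ℕ → ℚ}
    (h : ∀ x y z : ℚ, 0 < x → 0 < y → 0 < z → polyFun d c x y z = 0) {m : ℕ × ℕ × ℕ}
    (hm : m ∈ triples d) : c m = 0 := by
  set p : MvPolynomial (Fin 3) ℚ := ∑ m ∈ triples d, monomial (expo m) (c m) with hp
  have hpe : evalFun p = polyFun d c := by
    simp [hp, map_sum, evalFun_monomial, polyFun]
  have hp0 : p = 0 := by
    refine funext_set (fun _ => Set.Ioi (0 : ℚ)) (fun _ => Set.Ioi_infinite _) fun x hx => ?_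
    have h' := h (x 0) (x 1) (x 2) (hx 0 trivial) (hx 1 trivial) (hx 2 trivial)
    rw [← hpe] at h'
    have hx3 : x = ![x 0, x 1, x 2] := by
      ext i
      fin_cases i <;> rfl
    rw [map_zero, hx3]
    exact h'
  have hc : coeff (expo m) p = c m := by
    rw [hp, coeff_sum, Finset.sum_eq_single m]
    · simp
    · intro n _ hn
      rw [coeff_monomial, if_neg fun h => hn (expo_injective h)]
    · exact fun h => absurd hm h
  rw [← hc, hp0, coeff_zero]

/-- The linear form with coefficients `v`. -/
def linForm (v : ℚ × ℚ × ℚ) (x y z : ℚ) : ℚ := v.1 * x + v.2.1 * y + v.2.2 * z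

theorem homFun_comp {d : ℕ} {F : ℚ → ℚ → ℚ → ℚ} (hF : F ∈ homFun d) (u v w : ℚ × ℚ × ℚ) :
    (fun x y z => F (linForm u x y z) (linForm v x y z) (linForm w x y z)) ∈ homFun d := by
  obtain ⟨p, hp, rfl⟩ := hF
  let L : ℚ × ℚ × ℚ → MvPolynomial (Fin 3) ℚ :=
    fun v => C v.1 * X 0 + C v.2.1 * X 1 + C v.2.2 * X 2
  have hL : ∀ v, (L v).IsHomogeneous 1 := fun v =>
    ((isHomogeneous_C_mul_X _ _).add (isHomogeneous_C_mul_X _ _)).add (isHomogeneous_C_mul_X _ _)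
  refine ⟨aeval ![L u, L v, L w] p, ?_, ?_⟩
  · have h := IsHomogeneous.aeval hp ![L u, L v, L w] (n := 1) (by
      intro i
      fin_cases i <;> exact hL _)
    rwa [one_mul] at h
  · ext x y z
    change eval ![x, y, z] (aeval ![L u, L v, L w] p) = eval _ p
    rw [← coe_aeval_eq_eval, ← coe_aeval_eq_eval]
    simp only [RingHom.coe_coe]
    rw [← AlgHom.comp_apply, comp_aeval]
    congr 2
    ext i
    fin_cases i <;> simp [L, linForm]

theorem homFun_smul {d : ℕ} {F : ℚ → ℚ → ℚ → ℚ} (hF : F ∈ homFun d) (t x y z : ℚ) :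
    F (t * x) (t * y) (t * z) = t ^ d * F x y z := by
  have h := homFun_le_span d hF
  clear hF
  induction h using Submodule.span_induction with
  | mem G hG =>
    obtain ⟨m, hm, rfl⟩ := hG
    have hm' : m.1 + m.2.1 + m.2.2 = d := mem_triples.1 hm
    rw [monoFun, monoFun, ← hm']
    ring
  | zero => simp
  | add G H _ _ hG hH => simp [hG, hH, mul_add]
  | smul c G _ hG =>
    simp only [Pi.smul_apply, smul_eq_mul, hG]
    ring

/-- The restriction of a polynomial function to a line is a polynomial. -/
theorem homFun_line {d : ℕ} {F : ℚ → ℚ → ℚ → ℚ} (hF : F ∈ homFun d) (x y z a b c : ℚ) :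
    ∃ P : Polynomial ℚ, ∀ t, F (x + t * a) (y + t * b) (z + t * c) = P.eval t := by
  obtain ⟨p, -, rfl⟩ := hF
  refine ⟨aeval ![Polynomial.C x + Polynomial.X * Polynomial.C a,
    Polynomial.C y + Polynomial.X * Polynomial.C b,
    Polynomial.C z + Polynomial.X * Polynomial.C c] p, fun t => ?_⟩
  change eval _ p = _
  rw [← Polynomial.coe_aeval_eq_eval, ← coe_aeval_eq_eval]
  simp only [RingHom.coe_coe]
  rw [← AlgHom.comp_apply, comp_aeval]
  congr 2
  ext i
  fin_cases i <;> simp <;> ring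

theorem exists_multinomial (d : ℕ) : ∃ μ : ℕ × ℕ × ℕ → ℚ, (∀ m ∈ triples d, μ m ≠ 0) ∧
    ∀ x y z : ℚ, (x + y + z) ^ d = ∑ m ∈ triples d, μ m * (x ^ m.1 * y ^ m.2.1 * z ^ m.2.2) := by
  refine ⟨fun m => d.choose (m.1 + m.2.1) * (m.1 + m.2.1).choose m.1, fun m hm => ?_,
    fun x y z => ?_⟩
  · have h := mem_triples.1 hm
    have h1 := (Nat.choose_pos (show m.1 + m.2.1 ≤ d by omega)).ne'
    have h2 := (Nat.choose_pos (show m.1 ≤ m.1 + m.2.1 by omega)).ne'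
    simp only
    exact_mod_cast mul_ne_zero h1 h2
  · rw [sum_triples_eq d (fun i j k => (d.choose (i + j) * (i + j).choose i : ℚ) *
      (x ^ i * y ^ j * z ^ k)), (Commute.all _ _).add_pow']
    refine Finset.sum_congr rfl fun p _ => ?_
    rw [(Commute.all _ _).add_pow', Finset.sum_mul, Finset.smul_sum]
    refine Finset.sum_congr rfl fun q hq => ?_
    rw [Finset.HasAntidiagonal.mem_antidiagonal.1 hq]
    simp only [nsmul_eq_mul]
    ring

end PolynomialFunctions

section OctahedralFunctions

/-- The sum over the cyclic permutations of the variables. -/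
def cycSum : (ℚ → ℚ → ℚ → ℚ) →ₗ[ℚ] (ℚ → ℚ → ℚ → ℚ) where
  toFun F a b c := F a b c + F b c a + F c a b
  map_add' F G := by
    ext a b c
    simp only [Pi.add_apply]
    ring
  map_smul' r F := by
    ext a b c
    simp only [Pi.smul_apply, smul_eq_mul, RingHom.id_apply]
    ring

/-- The rotation by `π / 4` (up to scaling) of the first two variables. -/
def rot : (ℚ → ℚ → ℚ → ℚ) →ₗ[ℚ] (ℚ → ℚ → ℚ → ℚ) where
  toFun F a b c := F (a + b) (b - a) c
  map_add' _ _ := rfl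
  map_smul' _ _ := rfl

/-- The sum over all changes of signs. -/
def signSum (F : ℚ → ℚ → ℚ → ℚ) (a b c : ℚ) : ℚ :=
  F a b c + F (-a) b c + F a (-b) c + F (-a) (-b) c +
    (F a b (-c) + F (-a) b (-c) + F a (-b) (-c) + F (-a) (-b) (-c))

/-- The sum over all changes of signs and over the swap of the first two variables. -/
def symz : (ℚ → ℚ → ℚ → ℚ) →ₗ[ℚ] (ℚ → ℚ → ℚ → ℚ) where
  toFun F a b c := signSum F a b c + signSum F b a c
  map_add' F G := by
    ext a b c
    simp only [signSum, Pi.add_apply]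
    ring
  map_smul' r F := by
    ext a b c
    simp only [signSum, Pi.smul_apply, smul_eq_mul, RingHom.id_apply]
    ring

theorem cycSum_apply (F : ℚ → ℚ → ℚ → ℚ) (a b c : ℚ) :
    cycSum F a b c = F a b c + F b c a + F c a b := rfl

theorem rot_apply (F : ℚ → ℚ → ℚ → ℚ) (a b c : ℚ) : rot F a b c = F (a + b) (b - a) c := rfl

theorem symz_apply (F : ℚ → ℚ → ℚ → ℚ) (a b c : ℚ) :
    symz F a b c = signSum F a b c + signSum F b a c := rfl

theorem symz_swap (F : ℚ → ℚ → ℚ → ℚ) : symz (fun a b c => F b a c) = symz F := by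
  ext a b c
  simp only [symz_apply, signSum]
  ring

theorem symz_neg_left (F : ℚ → ℚ → ℚ → ℚ) : symz (fun a b c => F (-a) b c) = symz F := by
  ext a b c
  simp only [symz_apply, signSum, neg_neg]
  ring

theorem symz_neg_middle (F : ℚ → ℚ → ℚ → ℚ) : symz (fun a b c => F a (-b) c) = symz F := by
  ext a b c
  simp only [symz_apply, signSum, neg_neg]
  ring

theorem symz_neg_right (F : ℚ → ℚ → ℚ → ℚ) : symz (fun a b c => F a b (-c)) = symz F := by
  ext a b c
  simp only [symz_apply, signSum, neg_neg]
  ring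

theorem cycSum_symz_cyc (F : ℚ → ℚ → ℚ → ℚ) :
    cycSum (symz fun a b c => F b c a) = cycSum (symz F) := by
  ext a b c
  simp only [cycSum_apply, symz_apply, signSum]
  ring

theorem rot_symz (F : ℚ → ℚ → ℚ → ℚ) : rot (symz F) = symz (rot F) := by
  ext a b c
  simp only [rot_apply, symz_apply, signSum]
  ring_nf

/-- The homogeneous polynomial functions of degree `d` that are invariant under the changes of
signs and under the swap of the first two variables. -/
noncomputable def octaFun (d : ℕ) : Submodule ℚ (ℚ → ℚ → ℚ → ℚ) where
  carrier := {F | F ∈ homFun d ∧ (∀ a b c, F b a c = F a b c) ∧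
    (∀ a b c, F (-a) b c = F a b c) ∧ ∀ a b c, F a b (-c) = F a b c}
  zero_mem' := ⟨zero_mem _, fun _ _ _ => rfl, fun _ _ _ => rfl, fun _ _ _ => rfl⟩
  add_mem' := by
    rintro F G ⟨h0, h1, h2, h3⟩ ⟨k0, k1, k2, k3⟩
    refine ⟨add_mem h0 k0, fun a b c => ?_, fun a b c => ?_, fun a b c => ?_⟩
    · simp only [Pi.add_apply, h1 a b c, k1 a b c]
    · simp only [Pi.add_apply, h2 a b c, k2 a b c]
    · simp only [Pi.add_apply, h3 a b c, k3 a b c]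
  smul_mem' := by
    rintro r F ⟨h0, h1, h2, h3⟩
    refine ⟨Submodule.smul_mem _ _ h0, fun a b c => ?_, fun a b c => ?_, fun a b c => ?_⟩
    · simp only [Pi.smul_apply, h1 a b c]
    · simp only [Pi.smul_apply, h2 a b c]
    · simp only [Pi.smul_apply, h3 a b c]

theorem octaFun_neg_middle {d : ℕ} {F : ℚ → ℚ → ℚ → ℚ} (hF : F ∈ octaFun d) (a b c : ℚ) :
    F a (-b) c = F a b c := by
  rw [hF.2.1, hF.2.2.1, hF.2.1]

theorem symz_eq_of_mem_octaFun {d : ℕ} {F : ℚ → ℚ → ℚ → ℚ} (hF : F ∈ octaFun d) :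
    symz F = (16 : ℚ) • F := by
  ext a b c
  simp only [symz_apply, signSum, hF.2.2.1, hF.2.2.2, octaFun_neg_middle hF, hF.2.1 a b c,
    Pi.smul_apply, smul_eq_mul]
  ring

theorem symz_mem_octaFun {d : ℕ} {F : ℚ → ℚ → ℚ → ℚ} (hF : F ∈ homFun d) :
    symz F ∈ octaFun d := by
  have key : ∀ r s t : ℚ, (fun a b c => F (r * a) (s * b) (t * c)) ∈ homFun d ∧
      (fun a b c => F (r * b) (s * a) (t * c)) ∈ homFun d := fun r s t => by
    have h1 := homFun_comp hF (r, 0, 0) (0, s, 0) (0, 0, t)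
    have h2 := homFun_comp hF (0, r, 0) (s, 0, 0) (0, 0, t)
    simp only [linForm, zero_mul, add_zero, zero_add] at h1 h2
    exact ⟨h1, h2⟩
  refine ⟨?_, fun a b c => ?_, fun a b c => ?_, fun a b c => ?_⟩
  · have h : symz F = ∑ r ∈ ({1, -1} : Finset ℚ), ∑ s ∈ ({1, -1} : Finset ℚ),
        ∑ t ∈ ({1, -1} : Finset ℚ), ((fun a b c => F (r * a) (s * b) (t * c)) +
          fun a b c => F (r * b) (s * a) (t * c)) := by
      ext a b c
      have hne : (1 : ℚ) ≠ -1 := by norm_num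
      simp only [Finset.sum_pair hne, Pi.add_apply, one_mul, neg_one_mul, symz_apply, signSum]
      ring
    rw [h]
    exact sum_mem fun r _ => sum_mem fun s _ => sum_mem fun t _ =>
      add_mem (key r s t).1 (key r s t).2
  all_goals
    simp only [symz_apply, signSum, neg_neg]
    ring

theorem rot_mem_octaFun {d : ℕ} {F : ℚ → ℚ → ℚ → ℚ} (hF : F ∈ octaFun d) :
    rot F ∈ octaFun d := by
  refine ⟨?_, fun a b c => ?_, fun a b c => ?_, fun a b c => ?_⟩
  · have h := homFun_comp hF.1 (1, 1, 0) (-1, 1, 0) (0, 0, 1)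
    simp only [linForm, zero_mul, add_zero, zero_add, one_mul, neg_one_mul, neg_add_eq_sub] at h
    exact h
  · simp only [rot_apply]
    rw [show a - b = -(b - a) by ring, octaFun_neg_middle hF, add_comm]
  · simp only [rot_apply]
    rw [hF.2.1, sub_neg_eq_add, neg_add_eq_sub, add_comm]
  · exact hF.2.2.2 _ _ _

theorem rot_injective : Function.Injective rot := by
  intro F G h
  ext a b c
  have h' := congrFun (congrFun (congrFun h ((a - b) / 2)) ((a + b) / 2)) c
  simp only [rot_apply] at h'
  convert h' using 2 <;> ring

/-- A homogeneous polynomial function of positive degree that is invariant under the signed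
permutations and under one further involution vanishes. -/
theorem eq_zero_of_invariant {d : ℕ} (hd : d ≠ 0) {q : ℚ → ℚ → ℚ → ℚ} (hq : q ∈ homFun d)
    (hswap : ∀ x y z, q y x z = q x y z) (hcyc : ∀ x y z, q z x y = q x y z)
    (hneg : ∀ x y z, q (-x) y z = q x y z)
    (hT : ∀ x y z, q ((x - y + z) / 2) ((x - y - z) / 2) (x + y) = q x y z)
    {x y z : ℚ} (hx : x ≠ 0) : q x y z = 0 := by
  have hswap' : ∀ x y z, q x z y = q x y z := fun x y z => by
    rw [← hcyc, hswap, hcyc]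
  have hneg' : ∀ x y z, q x (-y) z = q x y z := fun x y z => by
    rw [← hswap, hneg, hswap]
  have htrans : ∀ x y z, q x (y + (y + z - x) / 2) (z - (y + z - x) / 2) = q x y z :=
    fun x y z => by
      have h1 := hT x (-y) z
      have h2 := hT ((x + y + z) / 2) (-(x - y)) ((x + y - z) / 2)
      rw [hneg'] at h1 h2
      rw [hswap', ← h1, hswap' _ (x + -y)]
      convert h2 using 2 <;> ring
  have hline : ∀ x y z : ℚ, y + z ≠ x → ∀ t, q x (y + t) (z - t) = q x y z :=
    fun x y z hne t => by
      obtain ⟨P, hP⟩ := homFun_line hq x y z 0 1 (-1)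
      simp only [mul_zero, add_zero, mul_one, mul_neg, ← sub_eq_add_neg] at hP
      have hℓ : (y + z - x) / 2 ≠ 0 := div_ne_zero (sub_ne_zero.2 hne) two_ne_zero
      have hn : ∀ n : ℕ, P.eval (n * ((y + z - x) / 2)) = q x y z := fun n => by
        induction n with
        | zero => simpa using (hP 0).symm
        | succ n ih =>
          rw [← ih, ← hP, ← hP, ← htrans x (y + n * ((y + z - x) / 2))]
          push_cast
          congr 1 <;> ring
      have hPC : P = Polynomial.C (q x y z) := by
        refine Polynomial.eq_of_infinite_eval_eq _ _ ((Set.infinite_range_of_injective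
          (f := fun n : ℕ => (n : ℚ) * ((y + z - x) / 2)) fun m n h => ?_).mono ?_)
        · exact_mod_cast mul_right_cancel₀ hℓ h
        · rintro _ ⟨n, rfl⟩
          simpa using hn n
      rw [hP, hPC, Polynomial.eval_C]
  have hline' : ∀ x y z : ℚ, x ≠ 0 → ∀ t, q x (y + t) (z - t) = q x y z := fun x y z h0 t => by
    by_cases h : y + z = x
    · have h' : y + z ≠ -x := by
        intro h''
        apply h0
        linarith
      rw [← hneg, hline _ _ _ h', hneg]
    · exact hline _ _ _ h t
  have hax : ∀ x y z : ℚ, x ≠ 0 → q x y z = q x 0 0 := fun x y z h0 => by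
    have h1 := hline' x y z h0 (-y)
    have h2 := hline' x 0 (y + z) h0 ((y + z) / 2)
    have h3 := hline' x 0 0 h0 (-((y + z) / 2))
    rw [zero_add, hneg'] at h3
    rw [← h1, ← h3]
    rw [zero_add] at h2
    convert h2.symm using 2 <;> ring
  have h1 : q 1 0 0 = 0 := by
    have h := homFun_smul hq 2 1 0 0
    rw [mul_zero, ← hax (2 * 1) 1 0 (by norm_num), hswap, hax 1 _ 0 one_ne_zero] at h
    have h2 : (2 : ℚ) ^ d ≠ 1 := by
      rw [Ne, pow_eq_one_iff_of_ne_zero hd]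
      norm_num
    have h3 : ((2 : ℚ) ^ d - 1) * q 1 0 0 = 0 := by linarith
    exact (mul_eq_zero.1 h3).resolve_left (sub_ne_zero.2 h2)
  rw [hax x y z hx]
  have h := homFun_smul hq x 1 0 0
  rw [h1, mul_one, mul_zero, mul_zero] at h
  exact h

/-- The `d`-th power of a linear form. -/
def powForm (d : ℕ) (p : ℚ × ℚ × ℚ) (a b c : ℚ) : ℚ := linForm p a b c ^ d

theorem powForm_eq_sum {d : ℕ} {μ : ℕ × ℕ × ℕ → ℚ}
    (hμ : ∀ x y z : ℚ, (x + y + z) ^ d = ∑ m ∈ triples d, μ m * (x ^ m.1 * y ^ m.2.1 * z ^ m.2.2))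
    (x y z : ℚ) :
    powForm d (x, y, z) = ∑ m ∈ triples d, (μ m * (x ^ m.1 * y ^ m.2.1 * z ^ m.2.2)) • monoFun m := by
  ext a b c
  simp only [powForm, linForm, hμ, Finset.sum_apply, Pi.smul_apply, smul_eq_mul, monoFun]
  refine Finset.sum_congr rfl fun m _ => ?_
  ring

/-- A linear form on functions that kills the octahedral functions with vanishing cyclic sum and
those whose rotation has vanishing cyclic sum kills all octahedral functions. -/
theorem apply_symz_eq_zero {d : ℕ} (hd : d ≠ 0) (Λ : (ℚ → ℚ → ℚ → ℚ) →ₗ[ℚ] ℚ)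
    (h1 : ∀ F ∈ octaFun d, cycSum F = 0 → Λ F = 0)
    (h2 : ∀ F ∈ octaFun d, cycSum (rot F) = 0 → Λ F = 0)
    {F : ℚ → ℚ → ℚ → ℚ} (hF : F ∈ homFun d) : Λ (symz F) = 0 := by
  obtain ⟨μ, hμ0, hμ⟩ := exists_multinomial d
  set c : ℕ × ℕ × ℕ → ℚ := fun m => μ m * Λ (symz (monoFun m)) with hc
  have hcyc : ∀ G ∈ homFun d, Λ (symz fun a b c => G b c a) = Λ (symz G) := fun G hG => by
    have hG' : (fun a b c => G b c a) ∈ homFun d := by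
      have h := homFun_comp hG (0, 1, 0) (0, 0, 1) (1, 0, 0)
      simpa only [linForm, zero_mul, one_mul, zero_add, add_zero] using h
    have h := h1 _ (sub_mem (symz_mem_octaFun hG') (symz_mem_octaFun hG)) (by
      rw [map_sub, cycSum_symz_cyc, sub_self])
    rwa [map_sub, sub_eq_zero] at h
  have hrot : ∀ G ∈ homFun d, ∀ H ∈ homFun d, (rot H = fun a b c => rot G b c a) →
      Λ (symz H) = Λ (symz G) := fun G hG H hH hGH => by
    have h := h2 _ (sub_mem (symz_mem_octaFun hH) (symz_mem_octaFun hG)) (by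
      rw [map_sub, map_sub, rot_symz, rot_symz, hGH, cycSum_symz_cyc, sub_self])
    rwa [map_sub, sub_eq_zero] at h
  have hq : ∀ x y z, Λ (symz (powForm d (x, y, z))) = polyFun d c x y z := fun x y z => by
    rw [powForm_eq_sum hμ, map_sum, map_sum, polyFun_apply]
    refine Finset.sum_congr rfl fun m _ => ?_
    rw [map_smul, map_smul, smul_eq_mul, hc]
    ring
  have hpow : ∀ p, powForm d p ∈ homFun d := fun ⟨x, y, z⟩ => by
    rw [powForm_eq_sum hμ]
    exact Submodule.sum_mem _ fun _ hm => Submodule.smul_mem _ _ (monoFun_mem_homFun hm)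
  have hzero : ∀ m ∈ triples d, c m = 0 := fun m hm => by
    refine coeff_eq_zero_of_pos (fun x y z hx _ _ => ?_) hm
    refine eq_zero_of_invariant hd (polyFun_mem_homFun d c) ?_ ?_ ?_ ?_ hx.ne' <;>
      intro x y z <;> rw [← hq, ← hq]
    · rw [← symz_swap]
      congr 2
      ext a b c
      simp only [powForm, linForm]
      ring
    · refine Eq.trans ?_ (hcyc _ (hpow (x, y, z)))
      congr 2
      ext a b c
      simp only [powForm, linForm]
      ring
    · rw [← symz_neg_left]
      congr 2
      ext a b c
      simp only [powForm, linForm]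
      ring
    · refine hrot _ (hpow _) _ (hpow _) ?_
      ext a b c
      simp only [powForm, linForm, rot_apply]
      ring
  have h := homFun_le_span d hF
  clear hF
  induction h using Submodule.span_induction with
  | mem G hG =>
    obtain ⟨m, hm, rfl⟩ := hG
    exact (mul_eq_zero.1 (hzero m hm)).resolve_left (hμ0 m hm)
  | zero => simp
  | add G H _ _ hG hH => rw [map_add, map_add, hG, hH, add_zero]
  | smul r G _ hG => rw [map_smul, map_smul, hG, smul_zero]

instance (d : ℕ) : Module.Finite ℚ (homFun d) :=
  have : Module.Finite ℚ (Submodule.span ℚ (monoFun '' (triples d : Set (ℕ × ℕ × ℕ)))) :=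
    Module.Finite.span_of_finite ℚ ((triples d).finite_toSet.image _)
  Submodule.finiteDimensional_of_le (homFun_le_span d)

instance (d : ℕ) : Module.Finite ℚ (octaFun d) :=
  Submodule.finiteDimensional_of_le fun _ hF => hF.1

/-- The octahedral functions whose cyclic sum, as well as that of their rotation, vanishes. -/
noncomputable def diFun (d : ℕ) : Submodule ℚ (octaFun d) :=
  LinearMap.ker (cycSum.domRestrict (octaFun d)) ⊓
    LinearMap.ker ((cycSum ∘ₗ rot).domRestrict (octaFun d))

theorem sup_ker_eq_top {d : ℕ} (hd : d ≠ 0) :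
    LinearMap.ker (cycSum.domRestrict (octaFun d)) ⊔
      LinearMap.ker ((cycSum ∘ₗ rot).domRestrict (octaFun d)) = ⊤ := by
  by_contra hne
  obtain ⟨l, hl0, hl⟩ := Submodule.exists_le_ker_of_lt_top _ (lt_top_iff_ne_top.2 hne)
  obtain ⟨Λ, hΛ⟩ := LinearMap.exists_extend l
  have hΛ' : ∀ F (hF : F ∈ octaFun d), Λ F = l ⟨F, hF⟩ := fun F hF =>
    LinearMap.congr_fun hΛ ⟨F, hF⟩
  refine hl0 (LinearMap.ext fun F => ?_)
  have h := apply_symz_eq_zero hd Λ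
    (fun G hG h => by
      rw [hΛ' G hG]
      exact hl (Submodule.mem_sup_left h))
    (fun G hG h => by
      rw [hΛ' G hG]
      exact hl (Submodule.mem_sup_right h)) F.2.1
  rw [symz_eq_of_mem_octaFun F.2, map_smul, hΛ' _ F.2, smul_eq_mul] at h
  simpa using h

theorem finrank_diFun_add {d : ℕ} (hd : d ≠ 0) :
    Module.finrank ℚ (diFun d) +
      2 * Module.finrank ℚ (LinearMap.range (cycSum.domRestrict (octaFun d))) =
      Module.finrank ℚ (octaFun d) := by
  have h := Submodule.finrank_sup_add_finrank_inf_eq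
    (LinearMap.ker (cycSum.domRestrict (octaFun d)))
    (LinearMap.ker ((cycSum ∘ₗ rot).domRestrict (octaFun d)))
  rw [sup_ker_eq_top hd, finrank_top] at h
  have h1 := (cycSum.domRestrict (octaFun d)).finrank_range_add_finrank_ker
  have h2 := ((cycSum ∘ₗ rot).domRestrict (octaFun d)).finrank_range_add_finrank_ker
  let ρ : octaFun d →ₗ[ℚ] octaFun d := rot.restrict fun _ hF => rot_mem_octaFun hF
  have hρ : Function.Surjective ρ := LinearMap.injective_iff_surjective.1 fun F G hFG =>
    Subtype.ext (rot_injective (congrArg Subtype.val hFG))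
  have h3 : LinearMap.range ((cycSum ∘ₗ rot).domRestrict (octaFun d)) =
      LinearMap.range (cycSum.domRestrict (octaFun d)) := by
    have hcomp : (cycSum ∘ₗ rot).domRestrict (octaFun d) =
      cycSum.domRestrict (octaFun d) ∘ₗ ρ := rfl
    rw [hcomp, LinearMap.range_comp_of_range_eq_top _ (LinearMap.range_eq_top.2 hρ)]
  rw [h3] at h2
  rw [diFun]
  omega

/-- Exponents, up to the symmetries of octahedral functions of degree `2 * e`. -/
def pairTriples (e : ℕ) : Finset (ℕ × ℕ × ℕ) := (triples e).filter fun m => m.1 ≤ m.2.1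

/-- Exponents, up to the symmetries of symmetric even functions of degree `2 * e`. -/
def sortedTriples (e : ℕ) : Finset (ℕ × ℕ × ℕ) :=
  (triples e).filter fun m => m.1 ≤ m.2.1 ∧ m.2.1 ≤ m.2.2

/-- Twice a triple. -/
def dbl (m : ℕ × ℕ × ℕ) : ℕ × ℕ × ℕ := (2 * m.1, 2 * m.2.1, 2 * m.2.2)

theorem mem_pairTriples {e : ℕ} {m : ℕ × ℕ × ℕ} :
    m ∈ pairTriples e ↔ m.1 + m.2.1 + m.2.2 = e ∧ m.1 ≤ m.2.1 := by
  rw [pairTriples, Finset.mem_filter, mem_triples]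

theorem mem_sortedTriples {e : ℕ} {m : ℕ × ℕ × ℕ} :
    m ∈ sortedTriples e ↔ m.1 + m.2.1 + m.2.2 = e ∧ m.1 ≤ m.2.1 ∧ m.2.1 ≤ m.2.2 := by
  rw [sortedTriples, Finset.mem_filter, mem_triples]

theorem eq_zero_of_eq_neg_self {F : ℚ → ℚ → ℚ → ℚ} (h : F = -F) : F = 0 := by
  ext a b c
  have h' := congrFun (congrFun (congrFun h a) b) c
  simp only [Pi.neg_apply] at h'
  simp only [Pi.zero_apply]
  linarith

theorem symz_monoFun_eq_zero {m : ℕ × ℕ × ℕ} (h : Odd m.1 ∨ Odd m.2.1 ∨ Odd m.2.2) :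
    symz (monoFun m) = 0 := by
  refine eq_zero_of_eq_neg_self ?_
  rw [← map_neg]
  rcases h with h | h | h
  · rw [← symz_neg_left]
    congr 1
    ext a b c
    simp [monoFun, h.neg_pow]
  · rw [← symz_neg_middle]
    congr 1
    ext a b c
    simp [monoFun, h.neg_pow]
  · rw [← symz_neg_right]
    congr 1
    ext a b c
    simp [monoFun, h.neg_pow]

theorem octaFun_le_span (e : ℕ) : octaFun (2 * e) ≤
    Submodule.span ℚ ((fun m => symz (monoFun (dbl m))) '' pairTriples e) := by
  intro F hF
  have h16 : F = (16 : ℚ)⁻¹ • symz F := by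
    rw [symz_eq_of_mem_octaFun hF, smul_smul]
    norm_num
  rw [h16]
  refine Submodule.smul_mem _ _ ?_
  have h := homFun_le_span _ hF.1
  clear hF h16
  induction h using Submodule.span_induction with
  | mem G hG =>
    obtain ⟨⟨i, j, k⟩, hm, rfl⟩ := hG
    have hm' : i + j + k = 2 * e := mem_triples.1 hm
    by_cases h : Odd i ∨ Odd j ∨ Odd k
    · rw [symz_monoFun_eq_zero h]
      exact zero_mem _
    · simp only [not_or, Nat.not_odd_iff_even] at h
      obtain ⟨⟨i, rfl⟩, ⟨j, rfl⟩, ⟨k, rfl⟩⟩ := h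
      refine Submodule.subset_span ?_
      rcases le_total i j with hij | hij
      · refine ⟨(i, j, k), mem_pairTriples.2 ⟨?_, hij⟩, ?_⟩
        · simp only
          omega
        · simp only [dbl, two_mul]
      · refine ⟨(j, i, k), mem_pairTriples.2 ⟨?_, hij⟩, ?_⟩
        · simp only
          omega
        · simp only [dbl, two_mul]
          rw [← symz_swap]
          congr 1
          ext a b c
          simp only [monoFun]
          ring
  | zero => simp
  | add G H _ _ hG hH => rw [map_add]; exact add_mem hG hH
  | smul r G _ hG => rw [map_smul]; exact Submodule.smul_mem _ _ hG

open scoped Classical in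
theorem finrank_octaFun_le (e : ℕ) :
    Module.finrank ℚ (octaFun (2 * e)) ≤ (pairTriples e).card := by
  have : Module.Finite ℚ (Submodule.span ℚ
      ((fun m => symz (monoFun (dbl m))) '' (pairTriples e : Set (ℕ × ℕ × ℕ)))) :=
    Module.Finite.span_of_finite ℚ ((pairTriples e).finite_toSet.image _)
  refine (Submodule.finrank_mono (octaFun_le_span e)).trans ?_
  rw [← Finset.coe_image]
  exact (finrank_span_finset_le_card _).trans Finset.card_image_le

theorem exists_coeff {d : ℕ} {m : ℕ × ℕ × ℕ} (hm : m ∈ triples d) :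
    ∃ δ : (ℚ → ℚ → ℚ → ℚ) →ₗ[ℚ] ℚ, ∀ n ∈ triples d, δ (monoFun n) = if n = m then 1 else 0 := by
  have hli : LinearIndependent ℚ (fun n : triples d => monoFun n) := by
    rw [Fintype.linearIndependent_iff]
    intro g hg n
    have hc : polyFun d (fun n => if h : n ∈ triples d then g ⟨n, h⟩ else 0) = 0 := by
      rw [polyFun, ← Finset.sum_coe_sort, ← hg]
      refine Finset.sum_congr rfl fun n _ => ?_
      rw [dif_pos n.2]
    have h := coeff_eq_zero_of_pos (fun x y z _ _ _ => by rw [hc]; rfl) n.2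
    rwa [dif_pos n.2] at h
  obtain ⟨δ, hδ⟩ := LinearMap.exists_extend (Finsupp.lapply ⟨m, hm⟩ ∘ₗ hli.repr)
  refine ⟨δ, fun n hn => ?_⟩
  have hmem : monoFun n ∈ Submodule.span ℚ (Set.range fun n : triples d => monoFun n) :=
    Submodule.subset_span ⟨⟨n, hn⟩, rfl⟩
  have h := LinearMap.congr_fun hδ ⟨monoFun n, hmem⟩
  rw [LinearMap.comp_apply, LinearMap.comp_apply, hli.repr_eq_single ⟨n, hn⟩ _ rfl] at h
  rw [Submodule.subtype_apply] at h
  rw [h, Finsupp.lapply_apply, Finsupp.single_apply]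
  simp only [Subtype.mk.injEq]

theorem cycSum_symz_monoFun (i j k : ℕ) : cycSum (symz (monoFun (dbl (i, j, k)))) =
    (8 : ℚ) • (monoFun (dbl (i, j, k)) + monoFun (dbl (j, i, k)) + monoFun (dbl (k, i, j)) +
      monoFun (dbl (k, j, i)) + monoFun (dbl (j, k, i)) + monoFun (dbl (i, k, j))) := by
  ext a b c
  simp only [cycSum_apply, symz_apply, signSum, monoFun, dbl, (even_two_mul _).neg_pow,
    Pi.smul_apply, Pi.add_apply, smul_eq_mul]
  ring

theorem card_le_finrank_range (e : ℕ) : (sortedTriples e).card ≤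
    Module.finrank ℚ (LinearMap.range (cycSum.domRestrict (octaFun (2 * e)))) := by
  have hmem : ∀ m ∈ sortedTriples e, dbl m ∈ triples (2 * e) := fun m hm => by
    rw [mem_triples, ← (mem_sortedTriples.1 hm).1, dbl]
    ring
  let v : sortedTriples e → LinearMap.range (cycSum.domRestrict (octaFun (2 * e))) := fun m =>
    ⟨cycSum (symz (monoFun (dbl m))),
      ⟨⟨_, symz_mem_octaFun (monoFun_mem_homFun (hmem m m.2))⟩, rfl⟩⟩
  have hv : LinearIndependent ℚ v := by
    refine LinearIndependent.of_comp (Submodule.subtype _) ?_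
    rw [Fintype.linearIndependent_iff]
    intro g hg n
    obtain ⟨δ, hδ⟩ := exists_coeff (hmem n n.2)
    have hexp : ∀ m : sortedTriples e, (m = n → 0 < δ (cycSum (symz (monoFun (dbl m))))) ∧
        (m ≠ n → δ (cycSum (symz (monoFun (dbl m)))) = 0) := by
      rintro ⟨⟨i, j, k⟩, hm⟩
      obtain ⟨⟨i', j', k'⟩, hn⟩ := n
      have hδ' : ∀ a b c, a + b + c = e → δ (monoFun (dbl (a, b, c))) =
          if a = i' ∧ b = j' ∧ c = k' then 1 else 0 := fun a b c h => by
        rw [hδ _ (mem_triples.2 (by simp only [dbl]; omega))]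
        simp [dbl]
      have hm' := mem_sortedTriples.1 hm
      have hn' := mem_sortedTriples.1 hn
      simp only at hm' hn'
      rw [cycSum_symz_monoFun]
      simp only [map_smul, map_add]
      rw [hδ' i j k (by omega), hδ' j i k (by omega), hδ' k i j (by omega),
        hδ' k j i (by omega), hδ' j k i (by omega), hδ' i k j (by omega)]
      simp only [Subtype.mk.injEq, Prod.mk.injEq, smul_eq_mul]
      constructor
      · rintro ⟨rfl, rfl, rfl⟩
        rw [if_pos ⟨rfl, rfl, rfl⟩]
        positivity
      · intro hne
        simp only [ne_eq, Subtype.mk.injEq, Prod.mk.injEq] at hne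
        rw [if_neg hne, if_neg, if_neg, if_neg, if_neg, if_neg]
        · norm_num
        all_goals omega
    have h := congrArg δ hg
    rw [map_sum, map_zero, Finset.sum_eq_single n] at h
    · rw [map_smul, smul_eq_mul] at h
      exact (mul_eq_zero.1 h).resolve_right ((hexp n).1 rfl).ne'
    · intro m _ hmn
      rw [map_smul, smul_eq_mul]
      exact mul_eq_zero_of_right _ ((hexp m).2 hmn)
    · exact fun h => absurd (Finset.mem_univ n) h
  simpa using hv.fintype_card_le_finrank

theorem card_pairTriples_add_two (e : ℕ) :
    (pairTriples (e + 2)).card ≤ (pairTriples e).card + (e + 3) := by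
  have h : pairTriples (e + 2) ⊆ (pairTriples e).image (fun m => (m.1 + 1, m.2.1 + 1, m.2.2)) ∪
      (Finset.range (e + 3)).image fun j => (0, j, e + 2 - j) := by
    rintro ⟨i, j, k⟩ hm
    obtain ⟨hs, hij⟩ := mem_pairTriples.1 hm
    simp only at hs hij
    rw [Finset.mem_union, Finset.mem_image, Finset.mem_image]
    rcases i with _ | i
    · right
      refine ⟨j, Finset.mem_range.2 (by omega), ?_⟩
      simp only [Prod.mk.injEq, true_and]
      omega
    · left
      obtain ⟨j, rfl⟩ : ∃ j', j = j' + 1 := ⟨j - 1, by omega⟩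
      refine ⟨(i, j, k), mem_pairTriples.2 ⟨?_, ?_⟩, rfl⟩ <;> simp only <;> omega
  refine (Finset.card_le_card h).trans ((Finset.card_union_le _ _).trans ?_)
  exact add_le_add Finset.card_image_le (Finset.card_image_le.trans (Finset.card_range _).le)

theorem card_sortedTriples_add_three (e : ℕ) :
    (sortedTriples e).card + ((e + 3) / 2 + 1) ≤ (sortedTriples (e + 3)).card := by
  have h : (sortedTriples e).image (fun m => (m.1 + 1, m.2.1 + 1, m.2.2 + 1)) ∪
      (Finset.range ((e + 3) / 2 + 1)).image (fun j => (0, j, e + 3 - j)) ⊆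
        sortedTriples (e + 3) := by
    refine Finset.union_subset ?_ ?_
    · intro m hm
      obtain ⟨n, hn, rfl⟩ := Finset.mem_image.1 hm
      rw [mem_sortedTriples] at hn ⊢
      simp only
      omega
    · intro m hm
      obtain ⟨j, hj, rfl⟩ := Finset.mem_image.1 hm
      rw [Finset.mem_range] at hj
      rw [mem_sortedTriples]
      simp only
      omega
  refine le_trans ?_ (Finset.card_le_card h)
  rw [Finset.card_union_of_disjoint, Finset.card_image_of_injective, Finset.card_image_of_injective,
    Finset.card_range]
  · intro i j hij
    simpa using (Prod.mk.inj (Prod.mk.inj hij).2).1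
  · rintro ⟨i, j, k⟩ ⟨i', j', k'⟩ hm
    simpa using hm
  · rw [Finset.disjoint_left]
    intro m hm hm'
    obtain ⟨n, -, rfl⟩ := Finset.mem_image.1 hm
    obtain ⟨j, -, hj⟩ := Finset.mem_image.1 hm'
    simp at hj

theorem card_pairTriples_le (e : ℕ) : (pairTriples (e + 1)).card ≤
    2 * (sortedTriples (e + 1)).card + ((2 * (e + 1)) ^ 2 - 1) / 48 := by
  induction e using Nat.strong_induction_on with
  | _ e ih =>
    rcases lt_or_ge e 6 with he | he
    · interval_cases e <;> decide
    · obtain ⟨e, rfl⟩ := Nat.exists_eq_add_of_le' he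
      have h0 := ih e (by omega)
      have h1 := card_pairTriples_add_two (e + 1)
      have h2 := card_pairTriples_add_two (e + 3)
      have h3 := card_pairTriples_add_two (e + 5)
      have h4 := card_sortedTriples_add_three (e + 1)
      have h5 := card_sortedTriples_add_three (e + 4)
      have h6 : ((2 * (e + 6 + 1)) ^ 2 - 1) / 48 = ((2 * (e + 1)) ^ 2 - 1) / 48 + (e + 4) := by
        rw [← Nat.add_mul_div_right _ _ (by norm_num)]
        congr 1
        have : 1 ≤ (2 * (e + 1)) ^ 2 := Nat.one_le_pow _ _ (by omega)
        zify [this, Nat.one_le_pow 2 (2 * (e + 6 + 1)) (by omega)]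
        ring
      rw [h6]
      simp only [add_assoc, Nat.reduceAdd] at *
      omega

theorem finrank_diFun_le {e : ℕ} (he : e ≠ 0) :
    Module.finrank ℚ (diFun (2 * e)) ≤ ((2 * e) ^ 2 - 1) / 48 := by
  obtain ⟨e, rfl⟩ := Nat.exists_eq_succ_of_ne_zero he
  have h1 := finrank_diFun_add (d := 2 * (e + 1)) (by omega)
  have h2 := finrank_octaFun_le (e + 1)
  have h3 := card_le_finrank_range (e + 1)
  have h4 := card_pairTriples_le e
  simp only [Nat.succ_eq_add_one]
  omega

end OctahedralFunctions

section PartialFractions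

open Finset.HasAntidiagonal

variable {K : Type*} [Field K]

/-- One half of the partial fraction expansion of `u ^ (a + 1) * v ^ (b + 1)`. -/
def pfSum (u s : K) (a b : ℕ) : K :=
  ∑ p ∈ antidiagonal (a + b), (p.2.choose b : K) * (u ^ (p.1 + 1) * s ^ (p.2 + 1))

theorem pfSum_succ_succ (u s : K) (a b : ℕ) :
    pfSum u s (a + 1) (b + 1) = s * (pfSum u s a (b + 1) + pfSum u s (a + 1) b) := by
  have h1 : a + 1 + (b + 1) = a + (b + 1) + 1 := by ring
  have h2 : a + 1 + b = a + (b + 1) := by ring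
  simp only [pfSum]
  rw [h1, h2, Finset.Nat.sum_antidiagonal_succ', ← Finset.sum_add_distrib, Finset.mul_sum]
  simp only [Nat.choose_zero_succ, Nat.cast_zero, zero_mul, zero_add]
  refine Finset.sum_congr rfl fun p _ => ?_
  rw [Nat.choose_succ_succ]
  push_cast
  ring

theorem pfSum_zero_left (u s : K) (b : ℕ) : pfSum u s 0 b = u * s ^ (b + 1) := by
  rw [pfSum, zero_add, Finset.sum_eq_single (0, b)]
  · simp
  · intro p hp hne
    have h := mem_antidiagonal.1 hp
    have hlt : p.2 < b := by
      by_contra hb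
      exact hne (Prod.ext (by simp only; omega) (by simp only; omega))
    rw [Nat.choose_eq_zero_of_lt hlt, Nat.cast_zero, zero_mul]
  · intro h
    exact absurd (mem_antidiagonal.2 (zero_add b)) h

theorem pfSum_succ_zero (u s : K) (a : ℕ) :
    pfSum u s (a + 1) 0 = s * pfSum u s a 0 + u ^ (a + 2) * s := by
  simp only [pfSum, add_zero, Nat.choose_zero_right, Nat.cast_one, one_mul]
  rw [Finset.Nat.sum_antidiagonal_succ', Finset.mul_sum, add_comm]
  congr 1
  · refine Finset.sum_congr rfl fun p _ => ?_
    ring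
  · ring

theorem mul_pow_eq_pfSum {u v s : K} (h : u * v = s * (u + v)) (a b : ℕ) :
    u ^ (a + 1) * v ^ (b + 1) = pfSum u s a b + pfSum v s b a := by
  have base : ∀ (u v : K), u * v = s * (u + v) → ∀ b : ℕ,
      u * v ^ (b + 1) = u * s ^ (b + 1) + pfSum v s b 0 := fun u v h b => by
    induction b with
    | zero =>
      rw [pfSum_zero_left]
      linear_combination h
    | succ b ih =>
      rw [pfSum_succ_zero]
      linear_combination s * ih + v ^ (b + 1) * h
  induction a generalizing b with
  | zero =>
    rw [pfSum_zero_left, zero_add, pow_one]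
    exact base u v h b
  | succ a iha =>
    induction b with
    | zero =>
      rw [pfSum_zero_left, zero_add, pow_one]
      have := base v u (by linear_combination h) (a + 1)
      linear_combination this
    | succ b ihb =>
      rw [pfSum_succ_succ, pfSum_succ_succ]
      linear_combination s * ihb + s * iha (b + 1) + u ^ (a + 1) * v ^ (b + 1) * h

end PartialFractions

section MultipleSums

/-- The terms of the series `ζ(a)`. -/
noncomputable def ordOne (a : ℕ) (n : ℕ) : ℝ := if 0 < n then ((n : ℝ) ^ a)⁻¹ else 0

/-- The terms of the series `ζ(a, b)`. -/
noncomputable def ordTwo (a b : ℕ) (x : ℕ × ℕ) : ℝ :=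
  if 0 < x.1 ∧ x.1 < x.2 then ((x.1 : ℝ) ^ a)⁻¹ * ((x.2 : ℝ) ^ b)⁻¹ else 0

/-- The terms of the series `ζ(a, b, c)`. -/
noncomputable def ordThree (a b c : ℕ) (x : ℕ × ℕ × ℕ) : ℝ :=
  if 0 < x.1 ∧ x.1 < x.2.1 ∧ x.2.1 < x.2.2 then
    ((x.1 : ℝ) ^ a)⁻¹ * ((x.2.1 : ℝ) ^ b)⁻¹ * ((x.2.2 : ℝ) ^ c)⁻¹ else 0

/-- The increasing pairs of positive integers, parametrized by their gaps. -/
def gapTwo (x : ℕ × ℕ) : ℕ × ℕ := (x.1 + 1, x.1 + x.2 + 2)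

/-- The increasing triples of positive integers, parametrized by their gaps. -/
def gapThree (x : ℕ × ℕ × ℕ) : ℕ × ℕ × ℕ := (x.1 + 1, x.1 + x.2.1 + 2, x.1 + x.2.1 + x.2.2 + 3)

theorem gapTwo_injective : Function.Injective gapTwo := by
  rintro ⟨m, k⟩ ⟨m', k'⟩ h
  simp only [gapTwo, Prod.mk.injEq] at h ⊢
  omega

theorem gapThree_injective : Function.Injective gapThree := by
  rintro ⟨m, k, l⟩ ⟨m', k', l'⟩ h
  simp only [gapThree, Prod.mk.injEq] at h ⊢
  omega

theorem ordTwo_eq_zero_of_notMem_range (a b : ℕ) : ∀ x ∉ Set.range gapTwo, ordTwo a b x = 0 := by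
  rintro ⟨p, q⟩ hx
  rw [ordTwo, if_neg]
  rintro ⟨h1, h2⟩
  simp only at h1 h2
  refine hx ⟨(p - 1, q - p - 1), ?_⟩
  simp only [gapTwo, Prod.mk.injEq]
  omega

theorem ordThree_eq_zero_of_notMem_range (a b c : ℕ) :
    ∀ x ∉ Set.range gapThree, ordThree a b c x = 0 := by
  rintro ⟨n, p, q⟩ hx
  rw [ordThree, if_neg]
  rintro ⟨h1, h2, h3⟩
  simp only at h1 h2 h3
  refine hx ⟨(n - 1, p - n - 1, q - p - 1), ?_⟩
  simp only [gapThree, Prod.mk.injEq]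
  omega

theorem ordThree_gapThree (a b c : ℕ) (x : ℕ × ℕ × ℕ) : ordThree a b c (gapThree x) =
    (((x.1 : ℝ) + 1) ^ a)⁻¹ * (((x.1 : ℝ) + x.2.1 + 2) ^ b)⁻¹ *
      (((x.1 : ℝ) + x.2.1 + x.2.2 + 3) ^ c)⁻¹ := by
  rw [ordThree, if_pos (by simp only [gapThree]; omega)]
  simp [gapThree]

theorem ordTwo_gapTwo (a b : ℕ) (x : ℕ × ℕ) : ordTwo a b (gapTwo x) =
    (((x.1 : ℝ) + 1) ^ a)⁻¹ * (((x.1 : ℝ) + x.2 + 2) ^ b)⁻¹ := by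
  rw [ordTwo, if_pos (by simp only [gapTwo]; omega)]
  simp [gapTwo]

theorem ordThree_nonneg (a b c : ℕ) (x : ℕ × ℕ × ℕ) : 0 ≤ ordThree a b c x := by
  rw [ordThree]
  split_ifs <;> positivity

theorem ordTwo_nonneg (a b : ℕ) (x : ℕ × ℕ) : 0 ≤ ordTwo a b x := by
  rw [ordTwo]
  split_ifs <;> positivity

theorem ordOne_nonneg (a n : ℕ) : 0 ≤ ordOne a n := by
  rw [ordOne]
  split_ifs <;> positivity

theorem summable_ordThree {a b c : ℕ} (ha : 1 ≤ a) (hb : 1 ≤ b) (hc : 2 ≤ c) :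
    Summable (ordThree a b c) := by
  rw [← gapThree_injective.summable_iff (ordThree_eq_zero_of_notMem_range a b c)]
  have hs : Summable fun n : ℕ => (((n : ℝ) + 1) ^ (4 / 3 : ℝ))⁻¹ := by
    have h := (summable_nat_add_iff 1).2 (Real.summable_nat_rpow_inv.2
      (show (1 : ℝ) < 4 / 3 by norm_num))
    simpa using h
  have h0 : ∀ n : ℕ, 0 ≤ (((n : ℝ) + 1) ^ (4 / 3 : ℝ))⁻¹ := fun n => by positivity
  have hs3 := hs.mul_of_nonneg (hs.mul_of_nonneg hs h0 h0) h0
    fun x => mul_nonneg (h0 x.1) (h0 x.2)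
  refine Summable.of_nonneg_of_le (fun x => ordThree_nonneg _ _ _ _) (fun x => ?_) hs3
  obtain ⟨m, k, l⟩ := x
  rw [Function.comp_apply, ordThree_gapThree]
  simp only
  rw [← mul_inv, ← mul_inv, ← mul_inv, ← mul_inv]
  set x : ℝ := m + 1 with hx
  set y : ℝ := k + 1 with hy
  set z : ℝ := l + 1 with hz
  have hx1 : 1 ≤ x := by simp [hx]
  have hy1 : 1 ≤ y := by simp [hy]
  have hz1 : 1 ≤ z := by simp [hz]
  rw [show (m : ℝ) + k + 2 = x + y by rw [hx, hy]; ring,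
    show (m : ℝ) + k + l + 3 = x + y + z by rw [hx, hy, hz]; ring]
  refine inv_anti₀ (by positivity) ?_
  calc x ^ (4 / 3 : ℝ) * (y ^ (4 / 3 : ℝ) * z ^ (4 / 3 : ℝ))
      = x * y * (x ^ (1 / 3 : ℝ) * y ^ (1 / 3 : ℝ) * z ^ (4 / 3 : ℝ)) := by
        rw [show (4 / 3 : ℝ) = 1 + 1 / 3 by norm_num, Real.rpow_one_add' (by positivity) (by norm_num),
          Real.rpow_one_add' (y := 1 / 3) (by positivity : 0 ≤ y) (by norm_num)]
        ring
    _ ≤ x * (x + y) * ((x + y + z) ^ (1 / 3 : ℝ) * (x + y + z) ^ (1 / 3 : ℝ) *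
          (x + y + z) ^ (4 / 3 : ℝ)) := by
        gcongr <;> linarith
    _ = x ^ 1 * (x + y) ^ 1 * (x + y + z) ^ 2 := by
        rw [← Real.rpow_add (by positivity), ← Real.rpow_add (by positivity), pow_one, pow_one,
          ← Real.rpow_natCast (x + y + z) 2]
        norm_num
    _ ≤ x ^ a * (x + y) ^ b * (x + y + z) ^ c := by
        gcongr <;> linarith

theorem summable_ordTwo {a b : ℕ} (ha : 1 ≤ a) (hb : 2 ≤ b) : Summable (ordTwo a b) := by
  rw [← gapTwo_injective.summable_iff (ordTwo_eq_zero_of_notMem_range a b)]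
  have hinj : Function.Injective fun x : ℕ × ℕ => (0, x.1, x.2) := fun x y h => by
    simpa [Prod.ext_iff] using h
  have h := (((gapThree_injective.summable_iff
    (ordThree_eq_zero_of_notMem_range 1 1 2)).2
      (summable_ordThree le_rfl le_rfl le_rfl)).comp_injective hinj).mul_left 8
  refine Summable.of_nonneg_of_le (fun x => ordTwo_nonneg _ _ _) (fun x => ?_) h
  obtain ⟨m, k⟩ := x
  simp only [Function.comp_apply]
  rw [ordTwo_gapTwo, ordThree_gapThree]
  simp only [Nat.cast_zero, zero_add, one_pow, inv_one, one_mul]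
  have hm : (0 : ℝ) ≤ m := Nat.cast_nonneg m
  have hk : (0 : ℝ) ≤ k := Nat.cast_nonneg k
  calc (((m : ℝ) + 1) ^ a)⁻¹ * (((m : ℝ) + k + 2) ^ b)⁻¹
      ≤ (((m : ℝ) + 1) ^ 1)⁻¹ * (((m : ℝ) + k + 2) ^ 2)⁻¹ := by
        gcongr <;> linarith
    _ = 8 * (((2 * (m + 1) : ℝ)) ^ 1)⁻¹ * ((2 * ((m : ℝ) + k + 2)) ^ 2)⁻¹ := by
        field_simp
        norm_num
    _ ≤ 8 * ((((m : ℝ) + 2) ^ 1)⁻¹ * (((m : ℝ) + k + 3) ^ 2)⁻¹) := by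
        rw [mul_assoc]
        gcongr <;> linarith

theorem summable_ordOne {a : ℕ} (ha : 2 ≤ a) : Summable (ordOne a) := by
  refine (Real.summable_nat_pow_inv.2 ha).congr fun n => ?_
  rw [ordOne]
  split_ifs with h
  · rfl
  · rw [Nat.eq_zero_of_not_pos h, Nat.cast_zero, zero_pow (by omega), inv_zero]

theorem hasSum_ordOne {a : ℕ} (ha : 2 ≤ a) : HasSum (ordOne a) (mzv 1 ![a]) := by
  have hinj : Function.Injective
      fun k : {k : Fin 1 → ℕ // StrictMono k ∧ ∀ i, 0 < k i} => k.1 0 := by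
    intro k l h
    ext i
    rw [Subsingleton.elim i 0]
    exact h
  have hrange : ∀ n ∉ Set.range
      (fun k : {k : Fin 1 → ℕ // StrictMono k ∧ ∀ i, 0 < k i} => k.1 0), ordOne a n = 0 := by
    intro n hn
    rw [ordOne, if_neg]
    exact fun h => hn ⟨⟨fun _ => n, Subsingleton.strictMono _, fun _ => h⟩, rfl⟩
  have h := ((hinj.summable_iff hrange).2 (summable_ordOne ha)).hasSum
  rw [← hinj.hasSum_iff hrange]
  convert h using 1
  rw [mzv]
  refine tsum_congr fun k => ?_
  simp [ordOne, k.2.2 0]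

theorem hasSum_ordTwo {a b : ℕ} (ha : 1 ≤ a) (hb : 2 ≤ b) :
    HasSum (ordTwo a b) (mzv 2 ![a, b]) := by
  have hinj : Function.Injective
      fun k : {k : Fin 2 → ℕ // StrictMono k ∧ ∀ i, 0 < k i} => (k.1 0, k.1 1) := by
    intro k l h
    simp only [Prod.mk.injEq] at h
    ext i
    fin_cases i
    · exact h.1
    · exact h.2
  have hrange : ∀ x ∉ Set.range
      (fun k : {k : Fin 2 → ℕ // StrictMono k ∧ ∀ i, 0 < k i} => (k.1 0, k.1 1)),
        ordTwo a b x = 0 := by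
    rintro ⟨p, q⟩ hx
    rw [ordTwo, if_neg]
    rintro ⟨h1, h2⟩
    refine hx ⟨⟨![p, q], ?_, ?_⟩, rfl⟩
    · rw [Fin.strictMono_iff_lt_succ]
      intro i
      fin_cases i
      exact h2
    · intro i
      fin_cases i
      · exact h1
      · exact h1.trans h2
  have h := ((hinj.summable_iff hrange).2 (summable_ordTwo ha hb)).hasSum
  rw [← hinj.hasSum_iff hrange]
  convert h using 1
  rw [mzv]
  refine tsum_congr fun k => ?_
  have h01 : k.1 0 < k.1 1 := k.2.1 (by decide)
  simp [ordTwo, k.2.2 0, h01, Fin.prod_univ_two]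
  ring

theorem hasSum_ordThree {a b c : ℕ} (ha : 1 ≤ a) (hb : 1 ≤ b) (hc : 2 ≤ c) :
    HasSum (ordThree a b c) (mzv 3 ![a, b, c]) := by
  have hinj : Function.Injective
      fun k : {k : Fin 3 → ℕ // StrictMono k ∧ ∀ i, 0 < k i} => (k.1 0, k.1 1, k.1 2) := by
    intro k l h
    simp only [Prod.mk.injEq] at h
    ext i
    fin_cases i
    · exact h.1
    · exact h.2.1
    · exact h.2.2
  have hrange : ∀ x ∉ Set.range
      (fun k : {k : Fin 3 → ℕ // StrictMono k ∧ ∀ i, 0 < k i} => (k.1 0, k.1 1, k.1 2)),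
        ordThree a b c x = 0 := by
    rintro ⟨n, p, q⟩ hx
    rw [ordThree, if_neg]
    rintro ⟨h1, h2, h3⟩
    refine hx ⟨⟨![n, p, q], ?_, ?_⟩, rfl⟩
    · rw [Fin.strictMono_iff_lt_succ]
      intro i
      fin_cases i
      · exact h2
      · exact h3
    · intro i
      fin_cases i
      · exact h1
      · exact h1.trans h2
      · exact h1.trans (h2.trans h3)
  have h := ((hinj.summable_iff hrange).2 (summable_ordThree ha hb hc)).hasSum
  rw [← hinj.hasSum_iff hrange]
  convert h using 1
  rw [mzv]
  refine tsum_congr fun k => ?_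
  have h01 : k.1 0 < k.1 1 := k.2.1 (by decide)
  have h12 : k.1 1 < k.1 2 := k.2.1 (by decide)
  simp [ordThree, k.2.2 0, h01, h12, Fin.prod_univ_three]
  ring

/-- The part of the stuffle product of `ζ(a)` and `ζ(b, c)` in which the summation variable of the
first factor is bounded by those of the second one. -/
theorem hasSum_truncated_stuffle {a b c : ℕ} (ha : 1 ≤ a) (hb : 1 ≤ b) (hc : 2 ≤ c) :
    HasSum (fun x : ℕ × ℕ × ℕ => if x.1 ≤ x.2.2 then ordOne a x.1 * ordTwo b c x.2 else 0)
      (mzv 3 ![a, b, c] + mzv 3 ![b, a, c] + mzv 2 ![a + b, c] + mzv 2 ![b, a + c]) := by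
  let e : (ℕ × ℕ × ℕ) ≃ (ℕ × ℕ × ℕ) := ⟨fun x => (x.2.1, x.1, x.2.2),
    fun x => (x.2.1, x.1, x.2.2), fun _ => rfl, fun _ => rfl⟩
  have h1 := hasSum_ordThree ha hb hc
  have h2 := e.hasSum_iff.2 (hasSum_ordThree hb ha hc)
  have h3 : HasSum (fun x : ℕ × ℕ × ℕ => if x.1 = x.2.1 then ordTwo (a + b) c x.2 else 0)
      (mzv 2 ![a + b, c]) := by
    rw [← Function.Injective.hasSum_iff (g := fun y : ℕ × ℕ => (y.1, y))]
    · simpa [Function.comp_def] using hasSum_ordTwo (by omega : 1 ≤ a + b) hc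
    · exact fun x y h => (Prod.mk.inj h).2
    · rintro ⟨n, y⟩ hx
      refine if_neg fun h => hx ⟨y, ?_⟩
      simp only at h
      rw [h]
  have h4 : HasSum (fun x : ℕ × ℕ × ℕ => if x.1 = x.2.2 then ordTwo b (a + c) x.2 else 0)
      (mzv 2 ![b, a + c]) := by
    rw [← Function.Injective.hasSum_iff (g := fun y : ℕ × ℕ => (y.2, y))]
    · simpa [Function.comp_def] using hasSum_ordTwo hb (by omega : 2 ≤ a + c)
    · exact fun x y h => (Prod.mk.inj h).2
    · rintro ⟨n, y⟩ hx
      refine if_neg fun h => hx ⟨y, ?_⟩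
      simp only at h
      rw [h]
  convert ((h1.add h2).add h3).add h4 using 1
  ext ⟨n, p, q⟩
  simp only [e, Function.comp_apply, Equiv.coe_fn_mk, ordOne, ordTwo, ordThree]
  by_cases hpq : 0 < p ∧ p < q
  · simp only [if_pos hpq]
    rcases Nat.eq_zero_or_pos n with rfl | hn
    · have h1 : 0 ≠ p := by omega
      have h2 : 0 ≠ q := by omega
      simp [h1, h2]
    · rcases lt_trichotomy n p with h | rfl | h
      · simp [hn, h, hpq.2, h.ne, show n ≤ q by omega, show n ≠ q by omega, show ¬ p < n by omega]
        ring
      · simp [hn, hpq.2, hpq.2.le, hpq.2.ne, pow_add]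
        ring
      · rcases lt_trichotomy n q with h' | rfl | h'
        · simp [hn, hpq.1, h, h', h'.le, h.ne', h'.ne, show ¬ n < p by omega]
          ring
        · simp [hn, hpq.1, h.ne', show ¬ n < p by omega, pow_add]
          ring
        · simp [show ¬ n ≤ q by omega, show ¬ n < p by omega, show ¬ n < q by omega, h.ne', h'.ne']
  · simp [if_neg hpq, if_neg (show ¬ (0 < n ∧ n < p ∧ p < q) by omega),
      if_neg (show ¬ (0 < p ∧ p < n ∧ n < q) by omega)]

theorem hasSum_mul_ordTwo {a b c : ℕ} (ha : 2 ≤ a) (hb : 1 ≤ b) (hc : 2 ≤ c) :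
    HasSum (fun x : ℕ × ℕ × ℕ => ordOne a x.1 * ordTwo b c x.2) (mzv 1 ![a] * mzv 2 ![b, c]) :=
  (hasSum_ordOne ha).mul (hasSum_ordTwo hb hc)
    ((summable_ordOne ha).mul_of_nonneg (summable_ordTwo hb hc) (ordOne_nonneg a)
      (ordTwo_nonneg b c))

/-- The stuffle product of `ζ(a)` and `ζ(b, c)`. -/
theorem mzv_stuffle {a b c : ℕ} (ha : 2 ≤ a) (hb : 1 ≤ b) (hc : 2 ≤ c) :
    mzv 1 ![a] * mzv 2 ![b, c] = mzv 3 ![a, b, c] + mzv 3 ![b, a, c] + mzv 3 ![b, c, a] +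
      mzv 2 ![a + b, c] + mzv 2 ![b, a + c] := by
  let e : (ℕ × ℕ × ℕ) ≃ (ℕ × ℕ × ℕ) := ⟨fun x => (x.2.1, x.2.2, x.1),
    fun x => (x.2.2, x.1, x.2.1), fun _ => rfl, fun _ => rfl⟩
  have h1 := hasSum_truncated_stuffle (by omega : 1 ≤ a) hb hc
  have h2 := e.hasSum_iff.2 (hasSum_ordThree hb (by omega : 1 ≤ c) ha)
  have h : HasSum (fun x : ℕ × ℕ × ℕ => ordOne a x.1 * ordTwo b c x.2)
      ((mzv 3 ![a, b, c] + mzv 3 ![b, a, c] + mzv 2 ![a + b, c] + mzv 2 ![b, a + c]) +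
        mzv 3 ![b, c, a]) := by
    convert h1.add h2 using 1
    ext ⟨n, p, q⟩
    simp only [e, Function.comp_apply, Equiv.coe_fn_mk, ordOne, ordTwo, ordThree]
    by_cases hpq : 0 < p ∧ p < q
    · rcases le_or_gt n q with h | h
      · simp [h, show ¬ q < n by omega]
      · simp [hpq.1, hpq.2, h, show ¬ n ≤ q by omega, show 0 < n by omega]
        ring
    · rw [if_neg hpq, if_neg (show ¬ (0 < p ∧ p < q ∧ q < n) by omega)]
      simp
  rw [(hasSum_mul_ordTwo ha hb hc).unique h]
  ring

/-- The relation between three families coming from the shuffle product of a zeta value with a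
double zeta value. -/
def shuffleExpr {A : Type*} [AddCommMonoid A] (s t u : ℕ → ℕ → ℕ → A) (a b c : ℕ) : A :=
  ∑ p ∈ Finset.HasAntidiagonal.antidiagonal (a + c), p.2.choose c •
      (∑ q ∈ Finset.HasAntidiagonal.antidiagonal (p.1 + b), q.2.choose b • s q.1 q.2 p.2 +
        ∑ q ∈ Finset.HasAntidiagonal.antidiagonal (b + p.1), q.2.choose p.1 • t q.1 q.2 p.2) +
    ∑ p ∈ Finset.HasAntidiagonal.antidiagonal (c + a), p.2.choose a • u b p.1 p.2

/-- Replace by zero the values of a family with vanishing last index. -/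
def dropZero {A : Type*} [Zero A] (t : ℕ → ℕ → ℕ → A) (i j k : ℕ) : A :=
  if k = 0 then 0 else t i j k

theorem shuffleExpr_dropZero {A : Type*} [AddCommMonoid A] (s t u : ℕ → ℕ → ℕ → A) (a b c : ℕ)
    (hc : c ≠ 0) : shuffleExpr s t u a b c =
      shuffleExpr (dropZero s) (dropZero t) (dropZero u) a b c + if a = 0 then u b c 0 else 0 := by
  rw [shuffleExpr, shuffleExpr, add_assoc]
  congr 1
  · refine Finset.sum_congr rfl fun p _ => ?_
    by_cases hp : p.2 = 0
    · rw [hp, Nat.choose_eq_zero_of_lt (Nat.pos_of_ne_zero hc), zero_smul, zero_smul]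
    · simp only [dropZero, if_neg hp]
  · rcases Nat.eq_zero_or_pos a with rfl | ha
    · obtain ⟨c, rfl⟩ := Nat.exists_eq_succ_of_ne_zero hc
      simp only [Nat.succ_eq_add_one, add_zero]
      rw [Finset.Nat.sum_antidiagonal_succ', Finset.Nat.sum_antidiagonal_succ']
      simp only [dropZero, Nat.choose_zero_right, one_smul, if_true, Nat.add_eq_zero_iff,
        one_ne_zero, and_false, if_false, zero_add]
      rw [add_comm]
    · rw [if_neg ha.ne', add_zero]
      refine Finset.sum_congr rfl fun p _ => ?_
      by_cases hp : p.2 = 0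
      · rw [hp, Nat.choose_eq_zero_of_lt ha, zero_smul, zero_smul]
      · simp only [dropZero, if_neg hp]

theorem map_shuffleExpr {A B : Type*} [AddCommMonoid A] [AddCommMonoid B] (φ : A →+ B)
    (s t u : ℕ → ℕ → ℕ → A) (a b c : ℕ) : φ (shuffleExpr s t u a b c) =
      shuffleExpr (fun i j k => φ (s i j k)) (fun i j k => φ (t i j k))
        (fun i j k => φ (u i j k)) a b c := by
  simp only [shuffleExpr, map_add, map_sum, map_nsmul]

theorem hasSum_shuffleExpr {ι : Type*} {s t u : ℕ → ℕ → ℕ → ι → ℝ} {s' t' u' : ℕ → ℕ → ℕ → ℝ}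
    (hs : ∀ i j k, HasSum (s i j k) (s' i j k)) (ht : ∀ i j k, HasSum (t i j k) (t' i j k))
    (hu : ∀ i j k, HasSum (u i j k) (u' i j k)) (a b c : ℕ) :
    HasSum (fun x => shuffleExpr (fun i j k => s i j k x) (fun i j k => t i j k x)
      (fun i j k => u i j k x) a b c) (shuffleExpr s' t' u' a b c) :=
  (hasSum_sum fun _ _ => ((hasSum_sum fun _ _ => (hs _ _ _).const_smul _).add
    (hasSum_sum fun _ _ => (ht _ _ _).const_smul _)).const_smul _).add
      (hasSum_sum fun _ _ => (hu _ _ _).const_smul _)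

theorem shuffleExpr_eq_mul (m k l : ℝ) (hm : 0 < m) (hk : 0 < k) (hl : 0 < l) (a b c : ℕ) :
    shuffleExpr (fun i j r => m⁻¹ ^ (i + 1) * (m + k)⁻¹ ^ (j + 1) * (m + k + l)⁻¹ ^ (r + 1))
      (fun i j r => k⁻¹ ^ (i + 1) * (m + k)⁻¹ ^ (j + 1) * (m + k + l)⁻¹ ^ (r + 1))
      (fun i j r => k⁻¹ ^ (i + 1) * (k + l)⁻¹ ^ (j + 1) * (m + k + l)⁻¹ ^ (r + 1)) a b c =
    m⁻¹ ^ (a + 1) * (k⁻¹ ^ (b + 1) * (k + l)⁻¹ ^ (c + 1)) := by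
  have h1 := mul_pow_eq_pfSum (u := m⁻¹) (v := (k + l)⁻¹) (s := (m + k + l)⁻¹)
    (by field_simp; ring) a c
  have h2 := mul_pow_eq_pfSum (u := m⁻¹) (v := k⁻¹) (s := (m + k)⁻¹) (by field_simp; ring)
  rw [show m⁻¹ ^ (a + 1) * (k⁻¹ ^ (b + 1) * (k + l)⁻¹ ^ (c + 1)) =
    k⁻¹ ^ (b + 1) * (m⁻¹ ^ (a + 1) * (k + l)⁻¹ ^ (c + 1)) by ring, h1, mul_add, shuffleExpr]
  congr 1
  · rw [pfSum, Finset.mul_sum]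
    refine Finset.sum_congr rfl fun p _ => ?_
    rw [show k⁻¹ ^ (b + 1) * (p.2.choose c * (m⁻¹ ^ (p.1 + 1) * (m + k + l)⁻¹ ^ (p.2 + 1))) =
      p.2.choose c * ((m⁻¹ ^ (p.1 + 1) * k⁻¹ ^ (b + 1)) * (m + k + l)⁻¹ ^ (p.2 + 1)) by ring,
      h2, nsmul_eq_mul, pfSum, pfSum, add_mul, Finset.sum_mul, Finset.sum_mul]
    congr 2 <;>
    · refine Finset.sum_congr rfl fun q _ => ?_
      rw [nsmul_eq_mul]
      ring
  · rw [pfSum, Finset.mul_sum]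
    refine Finset.sum_congr rfl fun p _ => ?_
    rw [nsmul_eq_mul]
    ring

/-- The triple zeta value `ζ(i + 1, j + 1, k + 1)`, replaced by zero when it diverges. -/
noncomputable def zetaThree : ℕ → ℕ → ℕ → ℝ := dropZero fun i j k => mzv 3 ![i + 1, j + 1, k + 1]

theorem hasSum_zetaThree (i j k : ℕ) :
    HasSum (fun x => dropZero (fun i j k => ordThree (i + 1) (j + 1) (k + 1) (gapThree x)) i j k)
      (zetaThree i j k) := by
  simp only [zetaThree, dropZero]
  split_ifs with h
  · exact hasSum_zero
  · exact (gapThree_injective.hasSum_iff (ordThree_eq_zero_of_notMem_range _ _ _)).2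
      (hasSum_ordThree (by omega) (by omega) (by omega))

theorem hasSum_shuffleExpr_sub (a b c : ℕ) (hc : c ≠ 0) :
    HasSum (fun x : ℕ × ℕ × ℕ => ((x.1 : ℝ) + 1)⁻¹ ^ (a + 1) *
        (((x.2.1 : ℝ) + 1)⁻¹ ^ (b + 1) * ((x.2.1 : ℝ) + x.2.2 + 2)⁻¹ ^ (c + 1)) -
        if a = 0 then ((x.2.1 : ℝ) + 1)⁻¹ ^ (b + 1) * ((x.2.1 : ℝ) + x.2.2 + 2)⁻¹ ^ (c + 1) *
          ((x.1 : ℝ) + x.2.1 + x.2.2 + 3)⁻¹ else 0)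
      (shuffleExpr zetaThree zetaThree zetaThree a b c) := by
  let e : (ℕ × ℕ × ℕ) ≃ (ℕ × ℕ × ℕ) := ⟨fun x => (x.2.1, x.1, x.2.2),
    fun x => (x.2.1, x.1, x.2.2), fun _ => rfl, fun _ => rfl⟩
  let e' : (ℕ × ℕ × ℕ) ≃ (ℕ × ℕ × ℕ) := ⟨fun x => (x.2.1, x.2.2, x.1),
    fun x => (x.2.2, x.1, x.2.1), fun _ => rfl, fun _ => rfl⟩
  have h := hasSum_shuffleExpr hasSum_zetaThree
    (fun i j k => e.hasSum_iff.2 (hasSum_zetaThree i j k))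
    (fun i j k => e'.hasSum_iff.2 (hasSum_zetaThree i j k)) a b c
  convert h using 1
  ext ⟨m, k, l⟩
  have hm := shuffleExpr_eq_mul (m + 1) (k + 1) (l + 1) (by positivity) (by positivity)
    (by positivity) a b c
  rw [shuffleExpr_dropZero _ _ _ _ _ _ hc] at hm
  simp only
  rw [show (k : ℝ) + l + 2 = k + 1 + (l + 1) by ring,
    show (m : ℝ) + k + l + 3 = m + 1 + (k + 1) + (l + 1) by ring, ← hm]
  simp only [zero_add, pow_one, add_sub_cancel_right]
  congr 1 <;> funext i j r <;> simp only [dropZero, ordThree_gapThree, e, e', Function.comp_apply,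
    Equiv.coe_fn_mk] <;> refine if_congr Iff.rfl rfl ?_ <;> simp only [inv_pow] <;> congr 3 <;> ring

/-- The shuffle product of `ζ(a + 1)` and `ζ(b + 1, c + 1)`. -/
theorem mzv_shuffle {a b c : ℕ} (ha : a ≠ 0) (hc : c ≠ 0) :
    mzv 1 ![a + 1] * mzv 2 ![b + 1, c + 1] =
      shuffleExpr zetaThree zetaThree zetaThree a b c := by
  refine HasSum.unique ?_ (hasSum_shuffleExpr_sub a b c hc)
  have hinj : Function.Injective fun x : ℕ × ℕ × ℕ => (x.1 + 1, gapTwo x.2) := by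
    rintro ⟨m, x⟩ ⟨m', x'⟩ h
    simp only [Prod.mk.injEq, add_left_inj] at h ⊢
    exact ⟨h.1, gapTwo_injective h.2⟩
  have h := hasSum_mul_ordTwo (a := a + 1) (b := b + 1) (c := c + 1) (by omega) (by omega) (by omega)
  rw [← hinj.hasSum_iff] at h
  · convert h using 1
    ext ⟨m, x⟩
    simp [ha, ordTwo_gapTwo, ordOne]
  · rintro ⟨n, x⟩ hx
    by_contra h0
    refine hx ?_
    rcases Nat.eq_zero_or_pos n with rfl | hn
    · simp [ordOne] at h0
    · by_cases hr : x ∈ Set.range gapTwo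
      · obtain ⟨y, rfl⟩ := hr
        exact ⟨(n - 1, y), Prod.ext (by simp only; omega) rfl⟩
      · exact absurd (by simp only; rw [ordTwo_eq_zero_of_notMem_range _ _ x hr, mul_zero]) h0

theorem hasSum_inv_sub_inv (N : ℕ) : HasSum (fun m : ℕ => ((m : ℝ) + 1)⁻¹ - ((m : ℝ) + N + 1)⁻¹)
    (∑ i ∈ Finset.range N, ((i : ℝ) + 1)⁻¹) := by
  induction N with
  | zero => simp
  | succ N ih =>
    have h : HasSum (fun m : ℕ => ((m : ℝ) + N + 1)⁻¹ - ((m : ℝ) + N + 1 + 1)⁻¹)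
        (((N : ℝ) + 1)⁻¹) := by
      rw [hasSum_iff_tendsto_nat_of_nonneg]
      · have h0 : Filter.Tendsto (fun n : ℕ => (((n : ℝ) + N + 1))⁻¹) Filter.atTop (nhds 0) := by
          have := (Filter.tendsto_add_atTop_iff_nat N).2
            (tendsto_one_div_add_atTop_nhds_zero_nat (𝕜 := ℝ))
          simpa using this
        have h1 := h0.const_sub (((N : ℝ) + 1)⁻¹)
        rw [sub_zero] at h1
        refine h1.congr fun n => ?_
        have h2 := Finset.sum_range_sub' (fun m : ℕ => ((m : ℝ) + N + 1)⁻¹) n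
        simp only [Nat.cast_zero, zero_add] at h2
        rw [← h2]
        refine Finset.sum_congr rfl fun m _ => ?_
        push_cast
        ring_nf
      · intro m
        rw [sub_nonneg]
        exact inv_anti₀ (by positivity) (by linarith)
    rw [Finset.sum_range_succ]
    convert ih.add h using 2 with m
    push_cast
    ring

/-- The regularized shuffle product of the divergent `ζ(1)` with `ζ(b + 1, c + 1)`. -/
theorem mzv_shuffle_one {b c : ℕ} (hc : c ≠ 0) :
    mzv 3 ![1, b + 1, c + 1] + mzv 3 ![b + 1, 1, c + 1] + mzv 2 ![1 + (b + 1), c + 1] +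
      mzv 2 ![b + 1, 1 + (c + 1)] = shuffleExpr zetaThree zetaThree zetaThree 0 b c := by
  have h1 := hasSum_truncated_stuffle (a := 1) (b := b + 1) (c := c + 1) le_rfl (by omega) (by omega)
  have h2 := hasSum_shuffleExpr_sub 0 b c hc
  have h1' := ((Equiv.prodComm (ℕ × ℕ) ℕ).hasSum_iff.2 h1).prod_fiberwise
    (g := fun x => (∑ i ∈ Finset.range x.2, ((i : ℝ) + 1)⁻¹) * ordTwo (b + 1) (c + 1) x) ?_
  have h2' := ((Equiv.prodComm (ℕ × ℕ) ℕ).hasSum_iff.2 h2).prod_fiberwise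
    (g := fun x => (∑ i ∈ Finset.range (gapTwo x).2, ((i : ℝ) + 1)⁻¹) *
      ordTwo (b + 1) (c + 1) (gapTwo x)) ?_
  · refine ((gapTwo_injective.hasSum_iff fun x hx => ?_).2 h1').unique h2'
    rw [ordTwo_eq_zero_of_notMem_range _ _ x hx, mul_zero]
  · intro x
    refine Eq.subst (motive := fun f => HasSum f _) (funext fun m => ?_)
      ((hasSum_inv_sub_inv (gapTwo x).2).mul_right (ordTwo (b + 1) (c + 1) (gapTwo x)))
    rw [ordTwo_gapTwo]
    simp only [Function.comp_apply, Equiv.prodComm_apply, Prod.swap_prod_mk, gapTwo]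
    push_cast
    rw [show (m : ℝ) + (x.1 + x.2 + 2) + 1 = m + x.1 + x.2 + 3 by ring, pow_one,
      inv_pow, inv_pow]
    ring
  · intro x
    have h := hasSum_sum_of_ne_finset_zero (L := .unconditional ℕ) (s := Finset.range (x.2 + 1))
      (f := fun n => if n ≤ x.2 then ordOne 1 n * ordTwo (b + 1) (c + 1) x else 0) fun n hn =>
        if_neg (by simpa using hn)
    refine Eq.subst (motive := HasSum _) (Eq.symm ?_) h
    rw [Finset.sum_range_succ', Finset.sum_mul]
    simp only [ordOne, lt_self_iff_false, if_false, zero_mul, ite_self, add_zero]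
    refine Finset.sum_congr rfl fun i hi => ?_
    rw [if_pos (Nat.succ_le_of_lt (Finset.mem_range.1 hi)), if_pos (Nat.succ_pos i)]
    simp

end MultipleSums

section GeneratingFunctions

open Finset.HasAntidiagonal

theorem sum_triples_swap_left {A : Type*} [AddCommMonoid A] (d : ℕ) (F : ℕ → ℕ → ℕ → A) :
    ∑ m ∈ triples d, F m.2.1 m.1 m.2.2 = ∑ m ∈ triples d, F m.1 m.2.1 m.2.2 := by
  refine Finset.sum_bij' (fun m _ => (m.2.1, m.1, m.2.2)) (fun m _ => (m.2.1, m.1, m.2.2)) ?_ ?_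
    (fun _ _ => rfl) (fun _ _ => rfl) (fun _ _ => rfl) <;>
  · intro m hm
    rw [mem_triples] at hm ⊢
    simp only
    omega

theorem sum_triples_swap_right {A : Type*} [AddCommMonoid A] (d : ℕ) (F : ℕ → ℕ → ℕ → A) :
    ∑ m ∈ triples d, F m.1 m.2.2 m.2.1 = ∑ m ∈ triples d, F m.1 m.2.1 m.2.2 := by
  refine Finset.sum_bij' (fun m _ => (m.1, m.2.2, m.2.1)) (fun m _ => (m.1, m.2.2, m.2.1)) ?_ ?_
    (fun _ _ => rfl) (fun _ _ => rfl) (fun _ _ => rfl) <;>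
  · intro m hm
    rw [mem_triples] at hm ⊢
    simp only
    omega

theorem pow_mul_add_pow {R : Type*} [CommSemiring R] (x y : R) (i j : ℕ) :
    x ^ i * (x + y) ^ j =
      ∑ q ∈ antidiagonal (i + j), (j.choose q.2 : R) * (x ^ q.1 * y ^ q.2) := by
  induction i with
  | zero =>
    rw [pow_zero, one_mul, zero_add, add_comm, (Commute.all _ _).add_pow',
      ← Finset.Nat.sum_antidiagonal_swap]
    refine Finset.sum_congr rfl fun q _ => ?_
    rw [nsmul_eq_mul, Prod.fst_swap, Prod.snd_swap, mul_comm (y ^ _)]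
  | succ i ih =>
    rw [show i + 1 + j = i + j + 1 by ring, Finset.Nat.sum_antidiagonal_succ,
      Nat.choose_eq_zero_of_lt (by simp only; omega), Nat.cast_zero, zero_mul, zero_add, pow_succ',
      mul_assoc, ih, Finset.mul_sum]
    refine Finset.sum_congr rfl fun q _ => ?_
    ring

/-- The effect on the coefficients of the substitution of `x + y` for `y`. -/
def substCoeff (t : ℕ → ℕ → ℕ → ℚ) (a b c : ℕ) : ℚ :=
  ∑ p ∈ antidiagonal (a + b), p.2.choose b • t p.1 p.2 c

theorem sum_triples_subst (d : ℕ) (t : ℕ → ℕ → ℕ → ℚ) (x y z : ℚ) :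
    ∑ m ∈ triples d, t m.1 m.2.1 m.2.2 * (x ^ m.1 * (x + y) ^ m.2.1 * z ^ m.2.2) =
      ∑ m ∈ triples d, substCoeff t m.1 m.2.1 m.2.2 * (x ^ m.1 * y ^ m.2.1 * z ^ m.2.2) := by
  rw [sum_triples_eq d fun i j k => t i j k * (x ^ i * (x + y) ^ j * z ^ k),
    sum_triples_eq d fun i j k => substCoeff t i j k * (x ^ i * y ^ j * z ^ k)]
  refine Finset.sum_congr rfl fun p _ => ?_
  have h : ∀ q ∈ antidiagonal p.1, substCoeff t q.1 q.2 p.2 * (x ^ q.1 * y ^ q.2 * z ^ p.2) =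
      ∑ r ∈ antidiagonal p.1,
        t r.1 r.2 p.2 * z ^ p.2 * ((r.2.choose q.2 : ℚ) * (x ^ q.1 * y ^ q.2)) := fun q hq => by
    rw [substCoeff, mem_antidiagonal.1 hq, Finset.sum_mul]
    refine Finset.sum_congr rfl fun r _ => ?_
    rw [nsmul_eq_mul]
    ring
  rw [Finset.sum_congr rfl h, Finset.sum_comm]
  refine Finset.sum_congr rfl fun r hr => ?_
  rw [← Finset.mul_sum, ← mem_antidiagonal.1 hr, ← pow_mul_add_pow]
  ring

/-- The polynomial function with coefficients `t`. -/
def coeffFun (d : ℕ) (t : ℕ → ℕ → ℕ → ℚ) : ℚ → ℚ → ℚ → ℚ :=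
  polyFun d fun m => t m.1 m.2.1 m.2.2

theorem coeffFun_apply (d : ℕ) (t : ℕ → ℕ → ℕ → ℚ) (x y z : ℚ) : coeffFun d t x y z =
    ∑ m ∈ triples d, t m.1 m.2.1 m.2.2 * (x ^ m.1 * y ^ m.2.1 * z ^ m.2.2) :=
  polyFun_apply _ _ _ _ _

theorem coeffFun_swap_left (d : ℕ) (t : ℕ → ℕ → ℕ → ℚ) (x y z : ℚ) :
    coeffFun d t y x z = coeffFun d (fun a b c => t b a c) x y z := by
  rw [coeffFun_apply, coeffFun_apply,
    ← sum_triples_swap_left d fun a b c => t a b c * (y ^ a * x ^ b * z ^ c)]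
  refine Finset.sum_congr rfl fun m _ => ?_
  ring

theorem coeffFun_swap_right (d : ℕ) (t : ℕ → ℕ → ℕ → ℚ) (x y z : ℚ) :
    coeffFun d t x z y = coeffFun d (fun a b c => t a c b) x y z := by
  rw [coeffFun_apply, coeffFun_apply,
    ← sum_triples_swap_right d fun a b c => t a b c * (x ^ a * z ^ b * y ^ c)]
  refine Finset.sum_congr rfl fun m _ => ?_
  ring

theorem coeffFun_subst (d : ℕ) (t : ℕ → ℕ → ℕ → ℚ) (x y z : ℚ) :
    coeffFun d t x (x + y) z = coeffFun d (substCoeff t) x y z := by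
  rw [coeffFun_apply, coeffFun_apply, sum_triples_subst]

theorem coeffFun_add (d : ℕ) (s t : ℕ → ℕ → ℕ → ℚ) (x y z : ℚ) :
    coeffFun d s x y z + coeffFun d t x y z =
      coeffFun d (fun a b c => s a b c + t a b c) x y z := by
  simp only [coeffFun_apply, add_mul, Finset.sum_add_distrib]

theorem coeffFun_shuffle (d : ℕ) (t : ℕ → ℕ → ℕ → ℚ) (x y z : ℚ) :
    coeffFun d t x (x + y) (x + z) + coeffFun d t y (x + y) (x + z) + coeffFun d t y z (x + z) =
      coeffFun d (shuffleExpr t t t) x y z := by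
  have h1 : coeffFun d t x (x + y) (x + z) =
      coeffFun d (fun a b c => substCoeff (fun a c b => substCoeff t a b c) a c b) x y z := by
    rw [coeffFun_subst, coeffFun_swap_right, coeffFun_subst, coeffFun_swap_right]
  have h2 : coeffFun d t y (x + y) (x + z) =
      coeffFun d (fun a b c => substCoeff (fun a c b => substCoeff t b a c) a c b) x y z := by
    rw [add_comm x y, coeffFun_subst, coeffFun_swap_left, coeffFun_swap_right, coeffFun_subst,
      coeffFun_swap_right]
  have h3 : coeffFun d t y z (x + z) =
      coeffFun d (fun a b c => substCoeff (fun c a b => t b c a) c a b) x y z := by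
    rw [add_comm x z, coeffFun_swap_left, coeffFun_swap_right, coeffFun_subst, coeffFun_swap_right,
      coeffFun_swap_left, coeffFun_swap_right, coeffFun_swap_left d _ x y]
  rw [h1, h2, h3, coeffFun_add, coeffFun_add]
  congr 1
  funext a b c
  simp only [substCoeff, shuffleExpr, smul_add, Finset.sum_add_distrib]

theorem coeffFun_eq_zero {d : ℕ} {t : ℕ → ℕ → ℕ → ℚ} (h : ∀ a b c, a + b + c = d → t a b c = 0)
    (x y z : ℚ) : coeffFun d t x y z = 0 := by
  rw [coeffFun_apply]
  refine Finset.sum_eq_zero fun m hm => ?_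
  rw [h _ _ _ (mem_triples.1 hm), zero_mul]

/-- The extension of a family of convergent values (indexed by `k ≠ 0`) which satisfies the
stuffle relations with divergent words. -/
def regularize (s : ℕ → ℕ → ℕ → ℚ) (i j k : ℕ) : ℚ :=
  if k ≠ 0 then s i j k else if j ≠ 0 then -s 0 i j - s i 0 j else if i ≠ 0 then s 0 0 i else 0

theorem regularize_of_ne_zero (s : ℕ → ℕ → ℕ → ℚ) (i j : ℕ) {k : ℕ} (hk : k ≠ 0) :
    regularize s i j k = s i j k := if_pos hk

theorem dropZero_regularize (s : ℕ → ℕ → ℕ → ℚ) : dropZero (regularize s) = dropZero s := by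
  funext i j k
  simp only [dropZero]
  split_ifs with h
  · rfl
  · exact regularize_of_ne_zero s i j h

/-- The double shuffle relations of weight `d + 3` and depth three modulo products and lower depth,
for a family indexed by the entries of the triple zeta values diminished by one. -/
structure IsDoubleShuffle (d : ℕ) (s : ℕ → ℕ → ℕ → ℚ) : Prop where
  stuffle : ∀ a b c, a + b + c = d → a ≠ 0 → c ≠ 0 → s a b c + s b a c + s b c a = 0
  shuffle : ∀ a b c, a + b + c = d → a ≠ 0 → c ≠ 0 →
    shuffleExpr (dropZero s) (dropZero s) (dropZero s) a b c = 0
  shuffle_one : ∀ b c, b + c = d → c ≠ 0 →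
    s 0 b c + s b 0 c = shuffleExpr (dropZero s) (dropZero s) (dropZero s) 0 b c

theorem IsDoubleShuffle.isShuffleZero {d : ℕ} {s : ℕ → ℕ → ℕ → ℚ} (hs : IsDoubleShuffle d s) :
    IsShuffleZero (coeffFun d (regularize s)) := by
  intro x y z
  have h1 : coeffFun d (regularize s) y z x =
      coeffFun d (fun a b c => regularize s b c a) x y z := by
    rw [coeffFun_swap_right, coeffFun_swap_left]
  rw [h1, coeffFun_swap_left d _ x y, coeffFun_add, coeffFun_add]
  refine coeffFun_eq_zero (fun a b c hd => ?_) _ _ _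
  by_cases hc : c = 0
  · subst hc
    by_cases ha : a = 0 <;> by_cases hb : b = 0
    · simp [regularize, ha, hb]
    · simp [regularize, ha, hb]
    · simp [regularize, ha, hb]
    · simp only [regularize, ha, hb, ne_eq, not_true_eq_false, not_false_eq_true, if_true, if_false]
      linarith [hs.stuffle a 0 b (by omega) ha hb]
  · by_cases ha : a = 0
    · simp [regularize, ha, hc]
    · simpa only [regularize_of_ne_zero _ _ _ hc, regularize_of_ne_zero _ _ _ ha] using
        hs.stuffle a b c hd ha hc

theorem IsDoubleShuffle.shuffleExpr_regularize {d : ℕ} {s : ℕ → ℕ → ℕ → ℚ}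
    (hs : IsDoubleShuffle d s) {a b c : ℕ} (hd : a + b + c = d) (hc : c ≠ 0) :
    shuffleExpr (regularize s) (regularize s) (regularize s) a b c = 0 := by
  rw [shuffleExpr_dropZero _ _ _ _ _ _ hc, dropZero_regularize]
  split_ifs with ha
  · subst ha
    rw [← hs.shuffle_one b c (by omega) hc]
    simp only [regularize, hc, ne_eq, not_true_eq_false, not_false_eq_true, if_true, if_false]
    ring
  · rw [hs.shuffle a b c hd ha hc, add_zero]

theorem IsDoubleShuffle.isShuffleZero_sharp {d : ℕ} {s : ℕ → ℕ → ℕ → ℚ}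
    (hs : IsDoubleShuffle d s) : IsShuffleZero (sharp (coeffFun d (regularize s))) := by
  set t := regularize s with ht
  refine isShuffleZero_sharp_of_const hs.isShuffleZero
    (fun x y => coeffFun d (shuffleExpr t t t) x y 0) fun x y z => ?_
  have h := coeffFun_shuffle d t x y (y + z)
  rw [show x + (y + z) = x + y + z by ring] at h
  simp only [sharp]
  rw [add_comm y x, show x + y + z = y + z + x by ring] at *
  rw [h, coeffFun_apply, coeffFun_apply]
  refine Finset.sum_congr rfl fun m hm => ?_
  by_cases hm0 : m.2.2 = 0
  · rw [hm0, pow_zero, pow_zero]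
  · rw [hs.shuffleExpr_regularize (mem_triples.1 hm) hm0, zero_mul, zero_mul]

end GeneratingFunctions

section Assembly

theorem MZIndex.Admissible.one_le_weight {z : MZIndex} (hz : z.Admissible) : 1 ≤ z.weight :=
  (hz.1 0).trans (Finset.single_le_sum (fun _ _ => Nat.zero_le _) (Finset.mem_univ 0))

theorem isMonomial_prod {zs : List MZIndex} (h : ∀ z ∈ zs, z.Admissible) :
    IsMonomial (zs.map fun z => mzv (z.1 + 1) z.2).prod (zs.map MZIndex.weight).sum
      (zs.map MZIndex.depth).sum :=
  ⟨0, zs, h, by simp, by simp, rfl⟩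

theorem isMonomial_mzv {z : MZIndex} (hz : z.Admissible) :
    IsMonomial (mzv (z.1 + 1) z.2) z.weight z.depth :=
  ⟨0, [z], by simpa using hz, by simp, by simp, by simp⟩

theorem isMonomial_mzv_one {a : ℕ} (ha : 2 ≤ a) : IsMonomial (mzv 1 ![a]) a 1 := by
  have h := isMonomial_mzv (z := ⟨0, ![a]⟩) ⟨fun i => by fin_cases i; simp; omega, ha⟩
  simpa [MZIndex.weight, MZIndex.depth] using h

theorem isMonomial_mzv_two {a b : ℕ} (ha : 1 ≤ a) (hb : 2 ≤ b) :
    IsMonomial (mzv 2 ![a, b]) (a + b) 2 := by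
  have h := isMonomial_mzv (z := ⟨1, ![a, b]⟩)
    ⟨fun i => by fin_cases i <;> simp <;> omega, hb⟩
  simpa [MZIndex.weight, MZIndex.depth, Fin.sum_univ_succ] using h

theorem isMonomial_mzv_three {a b c : ℕ} (ha : 1 ≤ a) (hb : 1 ≤ b) (hc : 2 ≤ c) :
    IsMonomial (mzv 3 ![a, b, c]) (a + b + c) 3 := by
  have h := isMonomial_mzv (z := ⟨2, ![a, b, c]⟩)
    ⟨fun i => by fin_cases i <;> simp <;> omega, hc⟩
  simpa [MZIndex.weight, MZIndex.depth, Fin.sum_univ_succ, add_assoc] using h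

theorem isMonomial_pi (a : ℕ) : IsMonomial (Real.pi ^ (2 * a)) (2 * a) 0 :=
  ⟨a, [], by simp, by simp, by simp, by simp⟩

theorem IsMonomial.mul {x y : ℝ} {w m w' m' : ℕ} (hx : IsMonomial x w m) (hy : IsMonomial y w' m') :
    IsMonomial (x * y) (w + w') (m + m') := by
  obtain ⟨a, zs, h1, rfl, rfl, rfl⟩ := hx
  obtain ⟨b, ys, k1, rfl, rfl, rfl⟩ := hy
  refine ⟨a + b, zs ++ ys, fun z hz => ?_, ?_, ?_, ?_⟩
  · rcases List.mem_append.1 hz with hz | hz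
    · exact h1 z hz
    · exact k1 z hz
  · rw [List.map_append, List.prod_append]
    ring
  · rw [List.map_append, List.sum_append]
    ring
  · rw [List.map_append, List.sum_append]

theorem IsMonomial.mem_Vspan {x : ℝ} {w m w' m' : ℕ} (hx : IsMonomial x w' m') (hw : w' ≤ w)
    (hm : m' ≤ m) : x ∈ Vspan w m :=
  Submodule.subset_span ⟨w', m', hw, hm, hx⟩

theorem Vspan_mono {w m w' m' : ℕ} (hw : w' ≤ w) (hm : m' ≤ m) : Vspan w' m' ≤ Vspan w m :=
  Submodule.span_mono fun _ ⟨w₁, m₁, h1, h2, h3⟩ => ⟨w₁, m₁, h1.trans hw, h2.trans hm, h3⟩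

theorem mul_mem_Vspan {w m w' m' : ℕ} {x y : ℝ} (hx : x ∈ Vspan w m) (hy : y ∈ Vspan w' m') :
    x * y ∈ Vspan (w + w') (m + m') := by
  have h := Submodule.mul_mem_mul hx hy
  rw [Vspan, Vspan, Submodule.span_mul_span] at h
  refine Submodule.span_le.2 ?_ h
  rintro _ ⟨x, ⟨w₁, m₁, h1, h2, h3⟩, y, ⟨w₂, m₂, k1, k2, k3⟩, rfl⟩
  exact (h3.mul k3).mem_Vspan (add_le_add h1 k1) (add_le_add h2 k2)

theorem mul_mem_Sspan {w m w₁ w₂ m₁ m₂ : ℕ} {x y : ℝ} (hx : x ∈ Vspan w₁ m₁)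
    (hy : y ∈ Vspan w₂ m₂) (h1 : 1 ≤ w₁) (h2 : 1 ≤ w₂) (hw : w₁ + w₂ ≤ w) (hm : m₁ + m₂ ≤ m) :
    x * y ∈ Sspan w m := by
  refine Submodule.mem_sup_right ?_
  refine Submodule.mem_iSup_of_mem w₁ <| Submodule.mem_iSup_of_mem w₂ <|
    Submodule.mem_iSup_of_mem m₁ <| Submodule.mem_iSup_of_mem m₂ <|
    Submodule.mem_iSup_of_mem h1 <| Submodule.mem_iSup_of_mem h2 <|
    Submodule.mem_iSup_of_mem hw <| Submodule.mem_iSup_of_mem hm ?_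
  exact Submodule.subset_span ⟨x, hx, y, hy, rfl⟩

theorem Vspan_pred_depth_le_Sspan (w m : ℕ) : Vspan w (m - 1) ≤ Sspan w m :=
  le_sup_right.trans le_sup_left

theorem Vspan_pred_weight_le_Sspan (w m : ℕ) : Vspan (w - 1) m ≤ Sspan w m :=
  le_sup_left.trans le_sup_left

theorem Sspan_le_Vspan (w m : ℕ) : Sspan w m ≤ Vspan w m := by
  refine sup_le (sup_le (Vspan_mono (Nat.sub_le _ _) le_rfl) (Vspan_mono le_rfl (Nat.sub_le _ _))) ?_
  simp only [iSup_le_iff]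
  intro w₁ w₂ m₁ m₂ _ _ hw hm
  refine Submodule.span_le.2 ?_
  rintro _ ⟨x, hx, y, hy, rfl⟩
  exact Vspan_mono hw hm (mul_mem_Vspan hx hy)

/-- The triple zeta values of weight `d + 3`. -/
def tripleZetas (d : ℕ) : Set ℝ :=
  (fun m : ℕ × ℕ × ℕ => mzv 3 ![m.1 + 1, m.2.1 + 1, m.2.2 + 1]) '' {m | m ∈ triples d ∧ m.2.2 ≠ 0}

theorem tripleZetas_finite (d : ℕ) : (tripleZetas d).Finite :=
  ((triples d).finite_toSet.subset fun _ hm => hm.1).image _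

theorem mzv_mem_tripleZetas {d a b c : ℕ} (hc : c ≠ 0) (hd : a + b + c = d) :
    mzv 3 ![a + 1, b + 1, c + 1] ∈ tripleZetas d :=
  ⟨(a, b, c), ⟨mem_triples.2 hd, hc⟩, rfl⟩

theorem Vspan_le (d : ℕ) :
    Vspan (d + 3) 3 ≤ Sspan (d + 3) 3 ⊔ Submodule.span ℚ (tripleZetas d) := by
  refine Submodule.span_le.2 ?_
  rintro x ⟨w', m', hw, hm, hx⟩
  rcases hw.lt_or_eq with hw | rfl
  · exact Submodule.mem_sup_left (Vspan_pred_weight_le_Sspan _ _ (hx.mem_Vspan (by omega) hm))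
  rcases hm.lt_or_eq with hm | rfl
  · exact Submodule.mem_sup_left
      (Vspan_pred_depth_le_Sspan _ _ (hx.mem_Vspan le_rfl (by omega)))
  obtain ⟨a, zs, hz, rfl, hw, hm⟩ := hx
  rcases zs with _ | ⟨z, zs⟩
  · simp at hm
  have h1 := (hz z List.mem_cons_self).one_le_weight
  rcases Nat.eq_zero_or_pos a with rfl | ha
  · rcases zs with _ | ⟨y, zs⟩
    · refine Submodule.mem_sup_right (Submodule.subset_span ?_)
      obtain ⟨p, n⟩ := z
      have hp : p = 2 := by
        simp [MZIndex.depth] at hm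
        omega
      subst hp
      obtain ⟨hn1, hn2⟩ := hz _ List.mem_cons_self
      have hn0 := hn1 0
      have hn1 := hn1 1
      have hsum : MZIndex.weight ⟨2, n⟩ = n 0 + n 1 + n 2 := Fin.sum_univ_three n
      simp only [List.map_cons, List.map_nil, List.sum_cons, List.sum_nil, hsum] at hw
      change 2 ≤ n 2 at hn2
      simp only at hn0 hn1
      have h := mzv_mem_tripleZetas (d := d) (a := n 0 - 1) (b := n 1 - 1) (c := n 2 - 1)
        (by omega) (by omega)
      rw [Nat.sub_add_cancel hn0, Nat.sub_add_cancel hn1,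
        Nat.sub_add_cancel (by omega : 1 ≤ n 2)] at h
      have hn : n = ![n 0, n 1, n 2] := by
        ext i
        fin_cases i <;> rfl
      rw [← hn] at h
      simpa using h
    · refine Submodule.mem_sup_left ?_
      have h2 := (hz y (by simp)).one_le_weight
      simp only [List.map_cons, List.sum_cons] at hw hm
      rw [List.map_cons, List.prod_cons, mul_zero, pow_zero, one_mul]
      refine mul_mem_Sspan ((isMonomial_mzv (hz z (by simp))).mem_Vspan le_rfl le_rfl)
        ((isMonomial_prod fun z' h => hz z' (List.mem_cons_of_mem _ h)).mem_Vspan le_rfl le_rfl)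
        h1 ?_ ?_ ?_ <;> simp only [List.map_cons, List.sum_cons] <;> omega
  · refine Submodule.mem_sup_left (mul_mem_Sspan ((isMonomial_pi a).mem_Vspan le_rfl le_rfl)
      ((isMonomial_prod hz).mem_Vspan le_rfl le_rfl) (by omega) ?_ (by omega) (by omega))
    simp only [List.map_cons, List.sum_cons]
    omega

/-- The values on the triple zeta values of a functional on the real numbers. -/
noncomputable def zetaValues (φ : ℝ →ₗ[ℚ] ℚ) (i j k : ℕ) : ℚ := φ (mzv 3 ![i + 1, j + 1, k + 1])

theorem shuffleExpr_zetaValues (φ : ℝ →ₗ[ℚ] ℚ) (a b c : ℕ) :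
    shuffleExpr (dropZero (zetaValues φ)) (dropZero (zetaValues φ)) (dropZero (zetaValues φ))
      a b c = φ (shuffleExpr zetaThree zetaThree zetaThree a b c) := by
  have h : dropZero (zetaValues φ) = fun i j k => φ.toAddMonoidHom (zetaThree i j k) := by
    funext i j k
    simp only [dropZero, zetaThree, zetaValues, LinearMap.toAddMonoidHom_coe]
    split_ifs <;> simp
  rw [h]
  exact (map_shuffleExpr φ.toAddMonoidHom _ _ _ a b c).symm

theorem isDoubleShuffle_zetaValues {d : ℕ} {φ : ℝ →ₗ[ℚ] ℚ}
    (hφ : Sspan (d + 3) 3 ≤ LinearMap.ker φ) : IsDoubleShuffle d (zetaValues φ) := by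
  have htwo : ∀ a b, 1 ≤ a → 2 ≤ b → a + b ≤ d + 3 → φ (mzv 2 ![a, b]) = 0 := fun a b ha hb h =>
    hφ (Vspan_pred_depth_le_Sspan _ _ ((isMonomial_mzv_two ha hb).mem_Vspan h (by omega)))
  have hmul : ∀ a b c, 2 ≤ a → 1 ≤ b → 2 ≤ c → a + b + c ≤ d + 3 →
      φ (mzv 1 ![a] * mzv 2 ![b, c]) = 0 := fun a b c ha hb hc h =>
    hφ (mul_mem_Sspan ((isMonomial_mzv_one ha).mem_Vspan le_rfl le_rfl)
      ((isMonomial_mzv_two hb hc).mem_Vspan le_rfl le_rfl) (by omega) (by omega) (by omega)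
      (by omega))
  refine ⟨fun a b c hd ha hc => ?_, fun a b c hd ha hc => ?_, fun b c hd hc => ?_⟩
  · have h := congrArg φ (mzv_stuffle (a := a + 1) (b := b + 1) (c := c + 1) (by omega) (by omega)
      (by omega))
    rw [hmul _ _ _ (by omega) (by omega) (by omega) (by omega)] at h
    simp only [map_add] at h
    rw [htwo _ _ (by omega) (by omega) (by omega), htwo _ _ (by omega) (by omega) (by omega),
      add_zero, add_zero] at h
    exact h.symm
  · rw [shuffleExpr_zetaValues, ← mzv_shuffle ha hc]
    exact hmul _ _ _ (by omega) (by omega) (by omega) (by omega)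
  · rw [shuffleExpr_zetaValues, ← mzv_shuffle_one hc]
    simp only [map_add]
    rw [htwo _ _ (by omega) (by omega) (by omega), htwo _ _ (by omega) (by omega) (by omega),
      add_zero, add_zero]
    rfl

theorem eq_zero_of_coeffFun_eq_zero {d : ℕ} {s : ℕ → ℕ → ℕ → ℚ}
    (h : ∀ x y z, coeffFun d (regularize s) x y z = 0) {a b c : ℕ} (hd : a + b + c = d)
    (hc : c ≠ 0) : s a b c = 0 := by
  have h0 := coeff_eq_zero_of_pos (fun x y z _ _ _ => h x y z) (mem_triples (m := (a, b, c)).2 hd)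
  rwa [regularize_of_ne_zero _ _ _ hc] at h0

/-- A triple zeta value of even weight is a combination of products and of values of smaller
weight or depth. -/
theorem tripleZetas_subset_Sspan {d : ℕ} (hd : Odd d) :
    tripleZetas d ⊆ (Sspan (d + 3) 3 : Set ℝ) := by
  rintro _ ⟨⟨a, b, c⟩, ⟨hm, hc⟩, rfl⟩
  by_contra hn
  obtain ⟨φ, hφ, hle⟩ := Submodule.exists_le_ker_of_notMem hn
  have hs := isDoubleShuffle_zetaValues hle
  refine hφ (eq_zero_of_coeffFun_eq_zero (s := zetaValues φ) (fun x y z => ?_) (mem_triples.1 hm) hc)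
  have h1 := even_of_doubleShuffle hs.isShuffleZero hs.isShuffleZero_sharp x y z
  have h2 := homFun_smul (polyFun_mem_homFun d fun m => regularize (zetaValues φ) m.1 m.2.1 m.2.2)
    (-1) x y z
  rw [hd.neg_one_pow] at h2
  simp only [neg_mul, one_mul] at h2
  change coeffFun _ _ _ _ _ = -coeffFun _ _ _ _ _ at h2
  linarith

theorem Vspan_eq_Sspan {d : ℕ} (hd : Odd d) : Vspan (d + 3) 3 = Sspan (d + 3) 3 :=
  le_antisymm ((Vspan_le d).trans (sup_le le_rfl (Submodule.span_le.2 (tripleZetas_subset_Sspan hd))))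
    (Sspan_le_Vspan _ _)

theorem octa_mem_map_diFun {d : ℕ} {s : ℕ → ℕ → ℕ → ℚ} (hs : IsDoubleShuffle d s) :
    octa (coeffFun d (regularize s)) ∈ (diFun d).map (octaFun d).subtype := by
  have hS := hs.isShuffleZero
  have hT := hs.isShuffleZero_sharp
  have hom : octa (coeffFun d (regularize s)) ∈ homFun d := by
    have h := homFun_comp (polyFun_mem_homFun d fun m => regularize s m.1 m.2.1 m.2.2)
      (0, 1, 1) (1, 1, 0) (1, 0, 1)
    simp only [linForm, zero_mul, one_mul, zero_add, add_zero] at h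
    exact h
  refine ⟨⟨_, hom, octa_swap hS, octa_neg_left hS hT, octa_neg_right hS hT⟩, ⟨?_, ?_⟩, rfl⟩
  · refine funext fun a => funext fun b => funext fun c => octa_cyclic_sum hS a b c
  · refine funext fun a => funext fun b => funext fun c => octa_rotated_cyclic_sum hT a b c

/-- The generating function of the regularized values of a family, in octahedral coordinates. -/
def octaGen (d : ℕ) : (ℕ → ℕ → ℕ → ℚ) →ₗ[ℚ] (ℚ → ℚ → ℚ → ℚ) where
  toFun s := octa (coeffFun d (regularize s))
  map_add' s t := by
    have h : regularize (s + t) = fun i j k => regularize s i j k + regularize t i j k := by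
      funext i j k
      simp only [regularize, Pi.add_apply]
      split_ifs <;> ring
    funext a b c
    rw [h]
    exact (coeffFun_add d _ _ _ _ _).symm
  map_smul' r s := by
    have h : regularize (r • s) = fun i j k => r * regularize s i j k := by
      funext i j k
      simp only [regularize, Pi.smul_apply, smul_eq_mul]
      split_ifs <;> ring
    funext a b c
    rw [h]
    simp only [octa, coeffFun_apply, RingHom.id_apply, Pi.smul_apply, smul_eq_mul, Finset.mul_sum,
      mul_assoc]

theorem eq_zero_of_octaGen_eq_zero {d : ℕ} {s : ℕ → ℕ → ℕ → ℚ} (h : octaGen d s = 0) {a b c : ℕ}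
    (hd : a + b + c = d) (hc : c ≠ 0) : s a b c = 0 := by
  refine eq_zero_of_coeffFun_eq_zero (fun x y z => ?_) hd hc
  have h' : octa (coeffFun d (regularize s)) ((y + z - x) / 2) ((x + y - z) / 2)
      ((x + z - y) / 2) = 0 := congrFun (congrFun (congrFun h _) _) _
  rw [octa] at h'
  convert h' using 2 <;> ring

theorem rank_Vspan_quotient_le (d : ℕ) :
    Module.rank ℚ (↥(Vspan (d + 3) 3) ⧸ (Sspan (d + 3) 3).comap (Vspan (d + 3) 3).subtype) ≤
      Module.finrank ℚ (diFun d) := by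
  set V := Vspan (d + 3) 3
  set S := Sspan (d + 3) 3
  let N : Submodule ℚ (ℝ ⧸ S) := Submodule.span ℚ (S.mkQ '' tripleZetas d)
  have hfin : Module.Finite ℚ N :=
    Module.Finite.span_of_finite ℚ ((tripleZetas_finite d).image _)
  let ι : (V ⧸ S.comap V.subtype) →ₗ[ℚ] (ℝ ⧸ S) := Submodule.mapQ _ _ V.subtype le_rfl
  have hι : Function.Injective ι := by
    rw [← LinearMap.ker_eq_bot, Submodule.ker_mapQ, Submodule.mkQ_map_self]
  have hS : ∀ x ∈ S, S.mkQ x = 0 := fun x hx => (Submodule.Quotient.mk_eq_zero S).2 hx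
  have hN : ∀ x, ι x ∈ N := by
    intro x
    obtain ⟨v, rfl⟩ := Submodule.mkQ_surjective _ x
    obtain ⟨s, hs, t, ht, hv⟩ := Submodule.mem_sup.1 (Vspan_le d v.2)
    have h : ι (Submodule.mkQ _ v) = S.mkQ t := by
      change S.mkQ v = _
      rw [← hv, map_add, hS s hs, zero_add]
    rw [h]
    exact (Submodule.span_image S.mkQ (s := tripleZetas d)).ge (Submodule.mem_map_of_mem ht)
  have hrank := LinearMap.rank_le_of_injective (ι.codRestrict N hN)
    fun x y hxy => hι (congrArg Subtype.val hxy)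
  obtain ⟨π, hπ⟩ := LinearMap.exists_leftInverse_of_injective N.subtype N.ker_subtype
  let G : Module.Dual ℚ N →ₗ[ℚ] (ℚ → ℚ → ℚ → ℚ) := octaGen d ∘ₗ
    { toFun := fun ψ => zetaValues (ψ ∘ₗ π ∘ₗ S.mkQ)
      map_add' := fun _ _ => rfl
      map_smul' := fun _ _ => rfl }
  have hG : ∀ ψ, G ψ ∈ (diFun d).map (octaFun d).subtype := fun ψ =>
    octa_mem_map_diFun (isDoubleShuffle_zetaValues (φ := ψ ∘ₗ π ∘ₗ S.mkQ) fun x hx => by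
      change ψ (π (S.mkQ x)) = 0
      rw [hS x hx, map_zero, map_zero])
  have hGinj : Function.Injective (G.codRestrict _ hG) := by
    rw [← LinearMap.ker_eq_bot, LinearMap.ker_codRestrict, LinearMap.ker_eq_bot']
    intro ψ hψ
    have hz : ∀ n (hn : n ∈ N), ψ ⟨n, hn⟩ = 0 := by
      intro n hn
      have hn' : (ψ ∘ₗ π) n = 0 := by
        refine (Submodule.span_le (p := LinearMap.ker (ψ ∘ₗ π))).2 ?_ hn
        rintro _ ⟨_, ⟨⟨a, b, c⟩, ⟨hm, hc⟩, rfl⟩, rfl⟩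
        exact eq_zero_of_octaGen_eq_zero hψ (mem_triples.1 hm) hc
      have h := LinearMap.congr_fun hπ ⟨n, hn⟩
      change π n = ⟨n, hn⟩ at h
      rwa [LinearMap.comp_apply, h] at hn'
    exact LinearMap.ext fun n => hz n.1 n.2
  have hfr := LinearMap.finrank_le_finrank_of_injective hGinj
  rw [Subspace.dual_finrank_eq, Submodule.finrank_map_subtype_eq] at hfr
  rw [← Module.finrank_eq_rank ℚ N] at hrank
  exact hrank.trans (by exact_mod_cast hfr)

end Assembly

/-- Goncharov's depth-3 theorem: (a) if `w` is even then `V_{w,3} = S_{w,3}`, and in particular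
every triple zeta value of weight `w` lies in `S_{w,3}`; (b) if `w ≥ 5` is odd then
`dim_ℚ V_{w,3}/S_{w,3} ≤ ⌊((w−3)²−1)/48⌋`. -/
theorem stmt5 (w : ℕ) (hw : 3 ≤ w) :
    (Even w → Vspan w 3 = Sspan w 3 ∧
      ∀ a b c : ℕ, 1 ≤ a → 1 ≤ b → 2 ≤ c → a + b + c = w →
        mzv 3 ![a, b, c] ∈ Sspan w 3) ∧
    (Odd w → 5 ≤ w →
      Module.rank ℚ (↥(Vspan w 3) ⧸ (Sspan w 3).comap (Vspan w 3).subtype) ≤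
        (((w - 3) ^ 2 - 1) / 48 : ℕ)) := by
  obtain ⟨d, rfl⟩ : ∃ d, w = d + 3 := ⟨w - 3, by omega⟩
  refine ⟨fun hw => ?_, fun hw hw5 => ?_⟩
  · have hd : Odd d := by grind
    rw [← Vspan_eq_Sspan hd]
    refine ⟨rfl, fun a b c ha hb hc h => ?_⟩
    exact (isMonomial_mzv_three ha hb hc).mem_Vspan h.le le_rfl
  · obtain ⟨e, rfl⟩ : ∃ e, d = 2 * e := ⟨d / 2, by grind⟩
    refine (rank_Vspan_quotient_le _).trans ?_
    rw [Nat.add_sub_cancel]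
    exact_mod_cast finrank_diFun_le (e := e) (by omega)
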